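/- Fix an odd integer p ≥ 5. There exist constants δ₀ > 0 and C > 0, depending only on p, with the following property. Let R > 0 and let u be an exterior solution on {r > R + |t|} with data (u₀, u₁) satisfying ‖(u₀,u₁)‖_{H(R)} ≤ δ₀ · R^{(p−3)/(p−1)}, and suppose that the three quantities ‖u‖_{L²L⁸(R)}, ‖u‖_{L³L⁶(R)}, and sup_{t∈ℝ} ‖(u(t,·), ∂_t u(t,·))‖_{H(R+|t|)} are all finite. Then ‖u‖_{L²L⁸(R)} + ‖u‖_{L³L⁶(R)} + sup_{t∈ℝ} ‖(u(t,·), ∂_t u(t,·))‖_{H(R+|t|)} ≤ C · ‖(u₀,u₁)‖_{H(R)}. -/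

import Mathlib

open MeasureTheory Filter Set
open scoped ENNReal

/-- The exterior energy norm `‖(v,w)‖_{H(R)} = (∫_R^∞ (|v'|² + |w|²) r³ dr)^{1/2}`. -/
noncomputable def eH (R : ℝ) (v w : ℝ → ℝ) : ℝ≥0∞ :=
  ((∫⁻ r in Ioi R, ENNReal.ofReal ((deriv v r) ^ 2 * r ^ 3)) +
      ∫⁻ r in Ioi R, ENNReal.ofReal ((w r) ^ 2 * r ^ 3)) ^ (1 / 2 : ℝ)

/-- The exterior spacetime norm `‖u‖_{L^aL^b(R)}` over the region `{r > R + |t|}`. -/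
noncomputable def eLL (a b R : ℝ) (u : ℝ → ℝ → ℝ) : ℝ≥0∞ :=
  (∫⁻ t : ℝ,
      (∫⁻ r in Ioi (R + |t|), ENNReal.ofReal (|u t r| ^ b * r ^ 3)) ^ (a / b)) ^ (1 / a)

/-- The time derivative `∂_t u` of a function of `(t,r)`. -/
noncomputable def dtu (u : ℝ → ℝ → ℝ) (t r : ℝ) : ℝ := deriv (fun s => u s r) t

/-- `u` is an exterior solution of `∂_t²u - ∂_r²u - (3/r)∂_r u = |u|^{p-1}u`
on `{r > R + |t|}`, of smoothness class `C^n`. -/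
def IsExtSol (p : ℕ) (n : ℕ∞) (R : ℝ) (u : ℝ → ℝ → ℝ) : Prop :=
  ContDiffOn ℝ n (fun q : ℝ × ℝ => u q.1 q.2) {q : ℝ × ℝ | R + |q.1| < q.2} ∧
  ∀ t r : ℝ, R + |t| < r →
    deriv (fun s => dtu u s r) t - deriv (deriv (u t)) r - (3 / r) * deriv (u t) r
      = |u t r| ^ (p - 1) * u t r

/-- The exterior energy of `u` outside `{r > R + |t|}` vanishes as `t → ±∞`. -/
def ExtEnergyVanishes (R : ℝ) (u : ℝ → ℝ → ℝ) : Prop :=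
  Tendsto (fun t : ℝ => ∫ r in Ioi (R + |t|),
      ((dtu u t r) ^ 2 + (deriv (u t) r) ^ 2) * r ^ 3) atTop (nhds 0) ∧
  Tendsto (fun t : ℝ => ∫ r in Ioi (R + |t|),
      ((dtu u t r) ^ 2 + (deriv (u t) r) ^ 2) * r ^ 3) atBot (nhds 0)

/-- `sup_{t∈ℝ} ‖(u(t,·), ∂_t u(t,·))‖_{H(R+|t|)}`. -/
noncomputable def supH (R : ℝ) (u : ℝ → ℝ → ℝ) : ℝ≥0∞ :=
  ⨆ t : ℝ, eH (R + |t|) (u t) (fun r => dtu u t r)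

/-!
After adding the divergence `∂_r(¾ r² u²)`, the energy density and its flux combine into sums of
squares. The energy identity is multiplied by the Morawetz weight `1 + √((r - t) / (r + t))`, cut
off in `r + t`, and integrated between outgoing cones. The lateral fluxes then have a sign, and the
derivatives of the weight produce a spacetime bulk term dominating `u²` and `|∂_r(r³ u²)| / r²`.
The energy `S` of a radial field controls its amplitude, `r |u| ≤ √(8S)`, so the forcing is bounded
by a constant times `S^{(p-1)/2} R^{4-p} (R + t)^{-2}` times the energy density, which is integrable
in time. For small data this is absorbed by continuity in time. The bulk term bounds `sup_r r u²` on
each time slice, which, together with the amplitude bound, yields the `L²L⁸` and `L³L⁶` norms for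
`t ≥ 0`; negative times follow by reversing time.
-/

/-! ### Tail integrals -/

/-- `∫_ρ^∞ f ≤ S` for a function `f ≥ 0`, expressed through the compact subintervals of `(ρ, ∞)`
so that no integrability up to the endpoints has to be carried along. -/
def TailIntegralLE (ρ : ℝ) (f : ℝ → ℝ) (S : ℝ) : Prop :=
  ∀ ⦃a b : ℝ⦄, ρ < a → a ≤ b → ∫ r in a..b, f r ≤ S

theorem intervalIntegrable_of_continuousOn_Ioi {ρ a b : ℝ} {f : ℝ → ℝ}
    (hf : ContinuousOn f (Ioi ρ)) (ha : ρ < a) (hab : a ≤ b) :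
    IntervalIntegrable f volume a b :=
  (hf.mono fun _ hx => ha.trans_le hx.1).intervalIntegrable_of_Icc hab

theorem aecover_Ioi_of_Ioc (ρ : ℝ) :
    AECover (volume.restrict (Ioi ρ)) atTop
      fun n : ℕ => Ioc (ρ + 1 / ((n : ℝ) + 1)) (ρ + 1 + n) := by
  have hleft : Tendsto (fun n : ℕ => ρ + 1 / ((n : ℝ) + 1)) atTop (nhds ρ) := by
    simpa using tendsto_one_div_add_atTop_nhds_zero_nat.const_add ρ
  have hright : Tendsto (fun n : ℕ => ρ + 1 + (n : ℝ)) atTop atTop :=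
    tendsto_atTop_add_const_left _ _ tendsto_natCast_atTop_atTop
  exact (aecover_Ioi_of_Ioi hleft).inter (aecover_Iic hright)

theorem exhaustion_endpoints (ρ : ℝ) (n : ℕ) :
    ρ < ρ + 1 / ((n : ℝ) + 1) ∧ ρ + 1 / ((n : ℝ) + 1) ≤ ρ + 1 + n := by
  have hpos : 0 < 1 / ((n : ℝ) + 1) := by positivity
  have hle : 1 / ((n : ℝ) + 1) ≤ 1 := by
    rw [div_le_one (by positivity)]
    linarith [n.cast_nonneg (α := ℝ)]
  constructor <;> linarith [n.cast_nonneg (α := ℝ)]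

theorem lintegral_Ioc_ofReal {f : ℝ → ℝ} {a b : ℝ} (hab : a ≤ b)
    (hf : IntervalIntegrable f volume a b) (hf0 : ∀ r ∈ Ioc a b, 0 ≤ f r) :
    ∫⁻ r in Ioc a b, ENNReal.ofReal (f r) = ENNReal.ofReal (∫ r in a..b, f r) := by
  rw [intervalIntegral.integral_of_le hab, ofReal_integral_eq_lintegral_ofReal hf.1]
  exact (ae_restrict_iff' measurableSet_Ioc).2 (ae_of_all _ hf0)

theorem tailIntegralLE_iff_lintegral_le {ρ S : ℝ} {f : ℝ → ℝ} (hf : ContinuousOn f (Ioi ρ))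
    (hf0 : ∀ r, ρ < r → 0 ≤ f r) (hS : 0 ≤ S) :
    TailIntegralLE ρ f S ↔ ∫⁻ r in Ioi ρ, ENNReal.ofReal (f r) ≤ ENNReal.ofReal S := by
  have hIoc {a b : ℝ} (ha : ρ < a) (hab : a ≤ b) :=
    lintegral_Ioc_ofReal hab (intervalIntegrable_of_continuousOn_Ioi hf ha hab)
      fun r hr => hf0 r (ha.trans hr.1)
  constructor
  · intro h
    have hmeas := (hf.aemeasurable (μ := volume) measurableSet_Ioi).ennreal_ofReal
    refine le_of_tendsto
      ((aecover_Ioi_of_Ioc ρ).lintegral_tendsto_of_countably_generated hmeas)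
      (Eventually.of_forall fun n => ?_)
    obtain ⟨ha, hab⟩ := exhaustion_endpoints ρ n
    have hsub : Ioc (ρ + 1 / ((n : ℝ) + 1)) (ρ + 1 + n) ⊆ Ioi ρ := fun r hr => ha.trans hr.1
    rw [Measure.restrict_restrict measurableSet_Ioc, inter_eq_left.2 hsub, hIoc ha hab]
    exact ENNReal.ofReal_le_ofReal (h ha hab)
  · intro h a b ha hab
    rw [← ENNReal.ofReal_le_ofReal_iff hS, ← hIoc ha hab]
    exact (lintegral_mono_set fun r hr => ha.trans hr.1).trans h

namespace TailIntegralLE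

variable {ρ S S' : ℝ} {f g : ℝ → ℝ}

theorem nonneg (h : TailIntegralLE ρ f S) : 0 ≤ S := by
  simpa using h (lt_add_one ρ) le_rfl

theorem mono (h : TailIntegralLE ρ g S) (hf : ContinuousOn f (Ioi ρ))
    (hg : ContinuousOn g (Ioi ρ)) (hfg : ∀ r, ρ < r → f r ≤ g r) (hS : S ≤ S') :
    TailIntegralLE ρ f S' := fun _ _ ha hab =>
  (intervalIntegral.integral_mono_on hab (intervalIntegrable_of_continuousOn_Ioi hf ha hab)
    (intervalIntegrable_of_continuousOn_Ioi hg ha hab)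
    fun r hr => hfg r (ha.trans_le hr.1)).trans ((h ha hab).trans hS)

theorem const_mul {c : ℝ} (hc : 0 ≤ c) (h : TailIntegralLE ρ f S) :
    TailIntegralLE ρ (fun r => c * f r) (c * S) := fun _ _ ha hab => by
  rw [intervalIntegral.integral_const_mul]
  exact mul_le_mul_of_nonneg_left (h ha hab) hc

theorem add (hf : ContinuousOn f (Ioi ρ)) (hg : ContinuousOn g (Ioi ρ))
    (h : TailIntegralLE ρ f S) (h' : TailIntegralLE ρ g S') :
    TailIntegralLE ρ (fun r => f r + g r) (S + S') := fun _ _ ha hab => by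
  rw [intervalIntegral.integral_add (intervalIntegrable_of_continuousOn_Ioi hf ha hab)
    (intervalIntegrable_of_continuousOn_Ioi hg ha hab)]
  exact add_le_add (h ha hab) (h' ha hab)

end TailIntegralLE

theorem setLIntegral_Ioi_add (ρ t : ℝ) (f : ℝ → ℝ≥0∞) :
    ∫⁻ r in Ioi (ρ + t), f r = ∫⁻ ξ in Ioi ρ, f (ξ + t) := by
  rw [← (measurePreserving_add_right volume t).setLIntegral_comp_preimage_emb
    (measurableEmbedding_addRight t), preimage_add_const_Ioi, add_sub_cancel_right]

theorem aecover_prod {α β : Type*} [MeasurableSpace α] [MeasurableSpace β] {μ : Measure α}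
    {ν : Measure β} {ι : Type*} {l : Filter ι} {φ : ι → Set α}
    {ψ : ι → Set β} (hφ : AECover μ l φ) (hψ : AECover ν l ψ) :
    AECover (μ.prod ν) l fun i => φ i ×ˢ ψ i where
  ae_eventually_mem := by
    filter_upwards [Measure.quasiMeasurePreserving_fst.ae hφ.ae_eventually_mem,
      Measure.quasiMeasurePreserving_snd.ae hψ.ae_eventually_mem] with q h₁ h₂
    exact h₁.and h₂
  measurableSet i := (hφ.measurableSet i).prod (hψ.measurableSet i)

theorem integrable_prod_restrict_Ioc {s T a b : ℝ} {N : ℝ → ℝ → ℝ}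
    (hN : ContinuousOn (Function.uncurry N) (Icc s T ×ˢ Icc a b)) :
    Integrable (Function.uncurry N)
      ((volume.restrict (Ioc s T)).prod (volume.restrict (Ioc a b))) := by
  rw [Measure.prod_restrict, ← Measure.volume_eq_prod]
  exact (hN.integrableOn_compact (isCompact_Icc.prod isCompact_Icc)).mono_set
    (prod_mono Ioc_subset_Icc_self Ioc_subset_Icc_self)

theorem intervalIntegrable_intervalIntegral {s T a b : ℝ} (hsT : s ≤ T) (hab : a ≤ b)
    {N : ℝ → ℝ → ℝ} (hN : ContinuousOn (Function.uncurry N) (Icc s T ×ˢ Icc a b)) :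
    IntervalIntegrable (fun τ => ∫ ξ in a..b, N τ ξ) volume s T := by
  rw [intervalIntegrable_iff_integrableOn_Ioc_of_le hsT]
  simpa only [intervalIntegral.integral_of_le hab, IntegrableOn, Function.uncurry_apply_pair]
    using (integrable_prod_restrict_Ioc hN).integral_prod_left

theorem lintegral_Ioc_Ioc_ofReal {T a b : ℝ} (hT : 0 ≤ T) (hab : a ≤ b) {N : ℝ → ℝ → ℝ}
    (hN : ContinuousOn (Function.uncurry N) (Icc 0 T ×ˢ Icc a b)) (hN0 : ∀ τ ξ, 0 ≤ N τ ξ) :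
    ∫⁻ τ in Ioc 0 T, ∫⁻ ξ in Ioc a b, ENNReal.ofReal (N τ ξ)
      = ENNReal.ofReal (∫ τ in (0 : ℝ)..T, ∫ ξ in a..b, N τ ξ) := by
  rw [← lintegral_Ioc_ofReal hT (intervalIntegrable_intervalIntegral hT hab hN) fun τ _ =>
    intervalIntegral.integral_nonneg hab fun ξ _ => hN0 τ ξ]
  refine setLIntegral_congr_fun measurableSet_Ioc fun τ hτ => ?_
  have hslice : ContinuousOn (N τ) (Icc a b) :=
    hN.comp (f := fun ξ => (τ, ξ)) (by fun_prop) fun ξ hξ => ⟨Ioc_subset_Icc_self hτ, hξ⟩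
  exact lintegral_Ioc_ofReal hab (hslice.intervalIntegrable_of_Icc hab) fun ξ _ => hN0 τ ξ

theorem lintegral_lintegral_Ioi_le {R S : ℝ} {N : ℝ → ℝ → ℝ}
    (hN : ContinuousOn (Function.uncurry N) (Ici 0 ×ˢ Ioi R)) (hN0 : ∀ τ ξ, 0 ≤ N τ ξ)
    (hS : ∀ T a b, 0 ≤ T → R < a → a ≤ b → ∫ τ in (0 : ℝ)..T, ∫ ξ in a..b, N τ ξ ≤ S) :
    ∫⁻ τ in Ioi (0 : ℝ), ∫⁻ ξ in Ioi R, ENNReal.ofReal (N τ ξ) ≤ ENNReal.ofReal S := by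
  have hmeas : AEMeasurable (fun q : ℝ × ℝ => ENNReal.ofReal (N q.1 q.2))
      ((volume.restrict (Ioi 0)).prod (volume.restrict (Ioi R))) := by
    rw [Measure.prod_restrict]
    exact ((hN.mono (prod_mono Ioi_subset_Ici_self subset_rfl)).aemeasurable
      (measurableSet_Ioi.prod measurableSet_Ioi)).ennreal_ofReal
  have hcover := aecover_prod
    (aecover_Iic tendsto_natCast_atTop_atTop (μ := volume.restrict (Ioi (0 : ℝ))))
    (aecover_Ioi_of_Ioc R)
  rw [← lintegral_prod _ hmeas]
  refine le_of_tendsto (hcover.lintegral_tendsto_of_countably_generated hmeas)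
    (Eventually.of_forall fun n => ?_)
  obtain ⟨ha, hab⟩ := exhaustion_endpoints R n
  set a := R + 1 / ((n : ℝ) + 1)
  set b := R + 1 + (n : ℝ)
  have hsub : Ioc a b ⊆ Ioi R := fun ξ hξ => ha.trans hξ.1
  have hrestrict : ((volume.restrict (Ioi 0)).prod (volume.restrict (Ioi R))).restrict
      (Iic (n : ℝ) ×ˢ Ioc a b) = (volume.restrict (Ioc 0 (n : ℝ))).prod
        (volume.restrict (Ioc a b)) := by
    rw [← Measure.prod_restrict, Measure.restrict_restrict measurableSet_Iic,
      Measure.restrict_restrict measurableSet_Ioc, inter_eq_left.2 hsub, Iic_inter_Ioi]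
  have hrect : Icc 0 (n : ℝ) ×ˢ Icc a b ⊆ Ici 0 ×ˢ Ioi R :=
    prod_mono Icc_subset_Ici_self fun ξ hξ => ha.trans_le hξ.1
  rw [hrestrict, lintegral_prod _ (hrestrict ▸ hmeas.restrict),
    lintegral_Ioc_Ioc_ofReal n.cast_nonneg hab (hN.mono hrect) hN0]
  exact ENNReal.ofReal_le_ofReal (hS n a b n.cast_nonneg ha hab)

/-! ### Radial profiles of finite energy -/

theorem sq_integral_le_integral_mul_integral_inv {a b : ℝ} (hab : a ≤ b) {d w : ℝ → ℝ}
    (hd : ContinuousOn d (Icc a b)) (hw : ContinuousOn w (Icc a b))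
    (hw0 : ∀ r ∈ Icc a b, 0 < w r) :
    (∫ r in a..b, d r) ^ 2 ≤ (∫ r in a..b, w r * d r ^ 2) * ∫ r in a..b, (w r)⁻¹ := by
  have hwinv : ContinuousOn (fun r => (w r)⁻¹) (Icc a b) := hw.inv₀ fun r hr => (hw0 r hr).ne'
  have int_d := hd.intervalIntegrable_of_Icc (μ := volume) hab
  have int_wd : IntervalIntegrable (fun r => w r * d r ^ 2) volume a b :=
    (hw.mul (hd.pow 2)).intervalIntegrable_of_Icc hab
  have int_winv := hwinv.intervalIntegrable_of_Icc (μ := volume) hab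
  have hquad : ∀ x : ℝ, 0 ≤ (∫ r in a..b, w r * d r ^ 2) * (x * x)
      + (2 * ∫ r in a..b, d r) * x + ∫ r in a..b, (w r)⁻¹ := by
    intro x
    calc 0 ≤ ∫ r in a..b, ((x * x) * (w r * d r ^ 2) + (2 * x) * d r + (w r)⁻¹) := by
          refine intervalIntegral.integral_nonneg hab fun r hr => ?_
          have hsq : (x * x) * (w r * d r ^ 2) + (2 * x) * d r + (w r)⁻¹
              = w r * (x * d r + (w r)⁻¹) ^ 2 := by
            field_simp [(hw0 r hr).ne']
            ring
          rw [hsq]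
          exact mul_nonneg (hw0 r hr).le (sq_nonneg _)
      _ = _ := by
          rw [intervalIntegral.integral_add ((int_wd.const_mul _).add (int_d.const_mul _)) int_winv,
            intervalIntegral.integral_add (int_wd.const_mul _) (int_d.const_mul _),
            intervalIntegral.integral_const_mul, intervalIntegral.integral_const_mul]
          ring
  have hdiscrim := discrim_le_zero hquad
  rw [discrim] at hdiscrim
  linarith

theorem integral_inv_cube_le {a b : ℝ} (ha : 0 < a) (hab : a ≤ b) :
    ∫ r in a..b, (r ^ 3)⁻¹ ≤ 1 / (2 * a ^ 2) := by
  have hmem : (0 : ℝ) ∉ uIcc a b := by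
    rw [uIcc_of_le hab]
    exact fun h => ha.not_ge h.1
  have hint := integral_zpow (a := a) (b := b) (n := -3) (Or.inr ⟨by norm_num, hmem⟩)
  have hb : 0 ≤ (b ^ 2)⁻¹ := by positivity
  calc ∫ r in a..b, (r ^ 3)⁻¹ = ∫ r in a..b, r ^ (-3 : ℤ) := rfl
    _ = ((b ^ 2)⁻¹ - (a ^ 2)⁻¹) / (-2) := by rw [hint]; norm_num
    _ ≤ 1 / (2 * a ^ 2) := by
        rw [one_div, mul_inv]
        linarith

section RadialProfile

variable {ρ : ℝ} {v : ℝ → ℝ}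

theorem hasDerivAt_of_contDiffOn_Ioi (hv : ContDiffOn ℝ 1 v (Ioi ρ)) {r : ℝ} (hr : ρ < r) :
    HasDerivAt v (deriv v r) r :=
  (hv.differentiableOn one_ne_zero).hasDerivAt (Ioi_mem_nhds hr)

theorem continuousOn_deriv_of_contDiffOn_Ioi (hv : ContDiffOn ℝ 1 v (Ioi ρ)) :
    ContinuousOn (deriv v) (Ioi ρ) :=
  hv.continuousOn_deriv_of_isOpen isOpen_Ioi le_rfl

theorem integral_deriv_of_contDiffOn_Ioi (hv : ContDiffOn ℝ 1 v (Ioi ρ)) {a b : ℝ} (ha : ρ < a)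
    (hab : a ≤ b) : ∫ r in a..b, deriv v r = v b - v a :=
  intervalIntegral.integral_eq_sub_of_hasDerivAt
    (fun _ hr => hasDerivAt_of_contDiffOn_Ioi hv (ha.trans_le (uIcc_of_le hab ▸ hr).1))
    (intervalIntegrable_of_continuousOn_Ioi (continuousOn_deriv_of_contDiffOn_Ioi hv) ha hab)

variable {m : ℝ}

theorem abs_sub_le_div_of_tailIntegralLE (hρ : 0 < ρ) (hv : ContDiffOn ℝ 1 v (Ioi ρ))
    (hm : 0 ≤ m) (hE : TailIntegralLE ρ (fun r => r ^ 3 * deriv v r ^ 2) (m ^ 2)) {a b : ℝ}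
    (ha : ρ < a) (hab : a ≤ b) : |v b - v a| ≤ m / a := by
  have ha0 : 0 < a := hρ.trans ha
  refine abs_le_of_sq_le_sq ?_ (by positivity)
  calc (v b - v a) ^ 2 = (∫ r in a..b, deriv v r) ^ 2 := by
        rw [integral_deriv_of_contDiffOn_Ioi hv ha hab]
    _ ≤ (∫ r in a..b, r ^ 3 * deriv v r ^ 2) * ∫ r in a..b, (r ^ 3)⁻¹ :=
        sq_integral_le_integral_mul_integral_inv hab
          ((continuousOn_deriv_of_contDiffOn_Ioi hv).mono fun r hr => ha.trans_le hr.1)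
          (by fun_prop) fun r hr => pow_pos (ha0.trans_le hr.1) 3
    _ ≤ m ^ 2 * (1 / (2 * a ^ 2)) := by
        refine mul_le_mul (hE ha hab) (integral_inv_cube_le ha0 hab) ?_ (sq_nonneg m)
        exact intervalIntegral.integral_nonneg hab fun r hr =>
          inv_nonneg.2 (pow_pos (ha0.trans_le hr.1) 3).le
    _ ≤ (m / a) ^ 2 := by
        rw [div_pow, ← mul_one_div (m ^ 2) (a ^ 2)]
        have : a ^ 2 ≤ 2 * a ^ 2 := by linarith [sq_nonneg a]
        gcongr

theorem abs_le_div_of_frequently_small (hρ : 0 < ρ) (hv : ContDiffOn ℝ 1 v (Ioi ρ))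
    (hm : 0 ≤ m) (hE : TailIntegralLE ρ (fun r => r ^ 3 * deriv v r ^ 2) (m ^ 2))
    (hsmall : ∀ ε > 0, ∃ᶠ r in atTop, |v r| < ε) {r : ℝ} (hr : ρ < r) : |v r| ≤ m / r := by
  refine le_of_forall_pos_lt_add fun ε hε => ?_
  obtain ⟨b, hb, hrb⟩ := ((hsmall ε hε).and_eventually (eventually_ge_atTop r)).exists
  have hdiff := abs_sub_le_div_of_tailIntegralLE hρ hv hm hE hr hrb
  have htri := abs_sub_abs_le_abs_sub (v r) (v b)
  rw [abs_sub_comm] at htri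
  linarith

theorem frequently_small_of_lintegral_rpow_lt_top {s : ℝ} (hs : 0 ≤ s)
    (hfin : ∫⁻ r in Ioi ρ, ENNReal.ofReal (|v r| ^ s * r ^ 3) < ⊤) {ε : ℝ} (hε : 0 < ε) :
    ∃ᶠ r in atTop, |v r| < ε := by
  intro hlarge
  obtain ⟨b, hb⟩ := eventually_atTop.1 hlarge
  set c := max b (max ρ 1)
  have hle : ∫⁻ _ in Ioi c, ENNReal.ofReal (ε ^ s)
      ≤ ∫⁻ r in Ioi ρ, ENNReal.ofReal (|v r| ^ s * r ^ 3) := by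
    refine (setLIntegral_mono' measurableSet_Ioi fun r hr => ?_).trans
      (lintegral_mono_set (Ioi_subset_Ioi ((le_max_left ρ 1).trans (le_max_right b _))))
    obtain ⟨hbr, -, h1r⟩ := (max_lt_iff.1 (mem_Ioi.1 hr)).imp_right max_lt_iff.1
    have hpow : ε ^ s ≤ |v r| ^ s :=
      Real.rpow_le_rpow hε.le (not_lt.1 (hb r hbr.le)) hs
    have hone : 1 ≤ r ^ 3 := one_le_pow₀ h1r.le
    exact ENNReal.ofReal_le_ofReal (hpow.trans (le_mul_of_one_le_right (by positivity) hone))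
  rw [setLIntegral_const, Real.volume_Ioi, ENNReal.mul_top] at hle
  · exact hfin.not_ge hle
  · exact (ENNReal.ofReal_pos.2 (Real.rpow_pos_of_pos hε s)).ne'

theorem tailIntegralLE_hardy (hρ : 0 < ρ) (hv : ContDiffOn ℝ 1 v (Ioi ρ))
    (hE : TailIntegralLE ρ (fun r => r ^ 3 * deriv v r ^ 2) (m ^ 2))
    (hdecay : ∀ r, ρ < r → |v r| ≤ m / r) :
    TailIntegralLE ρ (fun r => r * v r ^ 2) (2 * m ^ 2) := by
  intro a b ha hab
  have hvc := hv.continuousOn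
  have hdc := continuousOn_deriv_of_contDiffOn_Ioi hv
  set g : ℝ → ℝ := fun r => 2 * r * v r ^ 2 + r ^ 2 * (2 * v r * deriv v r)
  have int_g : IntervalIntegrable g volume a b :=
    intervalIntegrable_of_continuousOn_Ioi (by fun_prop) ha hab
  have int_energy : IntervalIntegrable (fun r => r ^ 3 * deriv v r ^ 2) volume a b :=
    intervalIntegrable_of_continuousOn_Ioi (by fun_prop) ha hab
  have hftc : ∫ r in a..b, g r = b ^ 2 * v b ^ 2 - a ^ 2 * v a ^ 2 := by
    refine intervalIntegral.integral_eq_sub_of_hasDerivAt (f := fun r => r ^ 2 * v r ^ 2)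
      (fun r hr => ?_) int_g
    have hvr := hasDerivAt_of_contDiffOn_Ioi hv (ha.trans_le (uIcc_of_le hab ▸ hr).1)
    exact ((hasDerivAt_pow 2 r).fun_mul (hvr.fun_pow 2)).congr_deriv (by simp only [g]; ring)
  -- Completing the square: `r v² ≤ (r² v²)' + r³ (v')²`.
  have hmono : ∫ r in a..b, r * v r ^ 2 ≤ ∫ r in a..b, (g r + r ^ 3 * deriv v r ^ 2) := by
    refine intervalIntegral.integral_mono_on hab
      (intervalIntegrable_of_continuousOn_Ioi (by fun_prop) ha hab) (int_g.add int_energy)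
      fun r hr => ?_
    have hr0 : 0 < r := hρ.trans (ha.trans_le hr.1)
    simp only [g]
    nlinarith [mul_nonneg hr0.le (sq_nonneg (v r + r * deriv v r))]
  have hb : b ^ 2 * v b ^ 2 ≤ m ^ 2 := by
    have hbv := hdecay b (ha.trans_le hab)
    rw [le_div_iff₀ (hρ.trans (ha.trans_le hab))] at hbv
    rw [← sq_abs (v b), ← mul_pow, mul_comm]
    exact pow_le_pow_left₀ (by positivity [hρ.trans (ha.trans_le hab)]) hbv 2
  rw [intervalIntegral.integral_add int_g int_energy, hftc] at hmono
  linarith [hE ha hab, mul_nonneg (sq_nonneg a) (sq_nonneg (v a))]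

end RadialProfile

/-- The Morawetz density `|∂_r(r³ v²)| / (2 r²) + v²` of a field with value `v` and radial
derivative `d` at radius `r`. Its spacetime integral is controlled by the energy. -/
noncomputable def bulkForm (r v d : ℝ) : ℝ := |r * v * d + 3 / 2 * v ^ 2| + v ^ 2

theorem sq_le_bulkForm (r v d : ℝ) : v ^ 2 ≤ bulkForm r v d :=
  le_add_of_nonneg_left (abs_nonneg _)

theorem bulkForm_nonneg (r v d : ℝ) : 0 ≤ bulkForm r v d :=
  (sq_nonneg v).trans (sq_le_bulkForm r v d)

section SliceStrichartz

variable {ρ M : ℝ} {v : ℝ → ℝ}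

theorem continuousOn_bulkForm (hv : ContDiffOn ℝ 1 v (Ioi ρ)) :
    ContinuousOn (fun r => bulkForm r (v r) (deriv v r)) (Ioi ρ) := by
  have hvc := hv.continuousOn
  have hdc := continuousOn_deriv_of_contDiffOn_Ioi hv
  unfold bulkForm
  fun_prop

theorem mul_sq_sub_mul_sq_le_integral_bulkForm (hv : ContDiffOn ℝ 1 v (Ioi ρ)) {a b : ℝ}
    (ha : ρ < a) (hab : a ≤ b) :
    a * v a ^ 2 - b * v b ^ 2 ≤ 2 * ∫ r in a..b, bulkForm r (v r) (deriv v r) := by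
  have hvc := hv.continuousOn
  have hdc := continuousOn_deriv_of_contDiffOn_Ioi hv
  set g : ℝ → ℝ := fun r => -(v r ^ 2 + r * (2 * v r * deriv v r))
  have int_g : IntervalIntegrable g volume a b :=
    intervalIntegrable_of_continuousOn_Ioi (by fun_prop) ha hab
  have hftc : ∫ r in a..b, g r = -(b * v b ^ 2) - -(a * v a ^ 2) := by
    refine intervalIntegral.integral_eq_sub_of_hasDerivAt (f := fun r => -(r * v r ^ 2))
      (fun r hr => ?_) int_g
    have hvr := hasDerivAt_of_contDiffOn_Ioi hv (ha.trans_le (uIcc_of_le hab ▸ hr).1)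
    exact ((hasDerivAt_id' r).fun_mul (hvr.fun_pow 2)).fun_neg.congr_deriv (by simp only [g]; ring)
  have int_bulk := intervalIntegrable_of_continuousOn_Ioi (continuousOn_bulkForm hv) ha hab
  have hmono : ∫ r in a..b, g r ≤ ∫ r in a..b, 2 * bulkForm r (v r) (deriv v r) := by
    refine intervalIntegral.integral_mono_on hab int_g (int_bulk.const_mul 2) fun r _ => ?_
    simp only [g, bulkForm]
    linarith [neg_abs_le (r * v r * deriv v r + 3 / 2 * v r ^ 2)]
  rw [hftc, intervalIntegral.integral_const_mul] at hmono
  linarith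

theorem mul_sq_le_of_tailIntegralLE_bulkForm (hρ : 0 < ρ) (hv : ContDiffOn ℝ 1 v (Ioi ρ))
    (hM : ∀ r, ρ < r → |v r| ≤ M / r) {q : ℝ}
    (hq : TailIntegralLE ρ (fun r => bulkForm r (v r) (deriv v r)) q) {a : ℝ} (ha : ρ < a) :
    a * v a ^ 2 ≤ 2 * q := by
  have hbound : ∀ b, a ≤ b → a * v a ^ 2 ≤ M ^ 2 / b + 2 * q := by
    intro b hab
    have hb0 : 0 < b := hρ.trans (ha.trans_le hab)
    have hvb : b * v b ^ 2 ≤ M ^ 2 / b := by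
      calc b * v b ^ 2 = b * |v b| ^ 2 := by rw [sq_abs]
        _ ≤ b * (M / b) ^ 2 := by gcongr; exact hM b (ha.trans_le hab)
        _ = M ^ 2 / b := by field_simp
    linarith [mul_sq_sub_mul_sq_le_integral_bulkForm hv ha hab, hq ha hab]
  have hlim : Tendsto (fun b : ℝ => M ^ 2 / b + 2 * q) atTop (nhds (0 + 2 * q)) :=
    (tendsto_const_nhds.div_atTop tendsto_id).add_const _
  rw [zero_add] at hlim
  exact ge_of_tendsto hlim ((eventually_ge_atTop a).mono hbound)

theorem abs_rpow_of_even {x : ℝ} {n : ℕ} (hn : Even n) : |x| ^ (n : ℝ) = x ^ n := by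
  rw [Real.rpow_natCast, hn.pow_abs]

theorem lintegral_le_ofReal_mul_lintegral_bulkForm {f : ℝ → ℝ} {c : ℝ} (hc : 0 ≤ c)
    (hf : ∀ r, ρ < r → f r ≤ c * v r ^ 2) :
    ∫⁻ r in Ioi ρ, ENNReal.ofReal (f r)
      ≤ ENNReal.ofReal c * ∫⁻ r in Ioi ρ, ENNReal.ofReal (bulkForm r (v r) (deriv v r)) := by
  rw [← lintegral_const_mul' _ _ ENNReal.ofReal_ne_top]
  refine setLIntegral_mono' measurableSet_Ioi fun r hr => ?_
  rw [← ENNReal.ofReal_mul hc]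
  exact ENNReal.ofReal_le_ofReal
    ((hf r hr).trans (mul_le_mul_of_nonneg_left (sq_le_bulkForm _ _ _) hc))

theorem mul_sq_le_toReal_lintegral_bulkForm (hρ : 0 < ρ) (hv : ContDiffOn ℝ 1 v (Ioi ρ))
    (hM : ∀ r, ρ < r → |v r| ≤ M / r)
    (hfin : ∫⁻ r in Ioi ρ, ENNReal.ofReal (bulkForm r (v r) (deriv v r)) ≠ ⊤) {r : ℝ}
    (hr : ρ < r) :
    r * v r ^ 2
      ≤ 2 * (∫⁻ r in Ioi ρ, ENNReal.ofReal (bulkForm r (v r) (deriv v r))).toReal :=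
  mul_sq_le_of_tailIntegralLE_bulkForm hρ hv hM
    ((tailIntegralLE_iff_lintegral_le (continuousOn_bulkForm hv) (fun _ _ => bulkForm_nonneg _ _ _)
      ENNReal.toReal_nonneg).2 (ENNReal.ofReal_toReal hfin).ge) hr

theorem lintegral_pow_eight_le_bulkForm (hρ : 0 < ρ) (hv : ContDiffOn ℝ 1 v (Ioi ρ))
    (hM : ∀ r, ρ < r → |v r| ≤ M / r) :
    (∫⁻ r in Ioi ρ, ENNReal.ofReal (|v r| ^ (8 : ℝ) * r ^ 3)) ^ ((2 : ℝ) / 8)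
      ≤ 2 * ∫⁻ r in Ioi ρ, ENNReal.ofReal (bulkForm r (v r) (deriv v r)) := by
  set Q := ∫⁻ r in Ioi ρ, ENNReal.ofReal (bulkForm r (v r) (deriv v r))
  rcases eq_or_ne Q ⊤ with htop | hfin
  · simp [htop]
  have hpoint : ∀ r, ρ < r → |v r| ^ (8 : ℝ) * r ^ 3 ≤ (2 * Q.toReal) ^ 3 * v r ^ 2 := by
    intro r hr
    have hr0 := hρ.trans hr
    calc |v r| ^ (8 : ℝ) * r ^ 3 = (r * v r ^ 2) ^ 3 * v r ^ 2 := by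
          rw [← Nat.cast_ofNat (n := 8), abs_rpow_of_even (by decide)]
          ring
      _ ≤ _ := by
          gcongr ?_ ^ 3 * _
          exact mul_sq_le_toReal_lintegral_bulkForm hρ hv hM hfin hr
  calc _ ≤ (ENNReal.ofReal ((2 * Q.toReal) ^ 3) * Q) ^ ((2 : ℝ) / 8) := by
        gcongr
        exact lintegral_le_ofReal_mul_lintegral_bulkForm (by positivity) hpoint
    _ ≤ ((2 * Q) ^ 4) ^ ((2 : ℝ) / 8) := by
        gcongr
        rw [ENNReal.ofReal_pow (by positivity), ENNReal.ofReal_mul zero_le_two,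
          ENNReal.ofReal_toReal hfin, ENNReal.ofReal_ofNat, pow_succ (2 * Q) 3]
        gcongr
        exact le_mul_of_one_le_left' one_le_two
    _ = 2 * Q := by
        rw [← ENNReal.rpow_natCast, ← ENNReal.rpow_mul]
        norm_num

theorem lintegral_pow_six_le_bulkForm (hρ : 0 < ρ) (hv : ContDiffOn ℝ 1 v (Ioi ρ)) (hM0 : 0 < M)
    (hM : ∀ r, ρ < r → |v r| ≤ M / r) :
    (∫⁻ r in Ioi ρ, ENNReal.ofReal (|v r| ^ (6 : ℝ) * r ^ 3)) ^ ((3 : ℝ) / 6)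
      ≤ ENNReal.ofReal (2 * M)
        * ∫⁻ r in Ioi ρ, ENNReal.ofReal (bulkForm r (v r) (deriv v r)) := by
  set Q := ∫⁻ r in Ioi ρ, ENNReal.ofReal (bulkForm r (v r) (deriv v r))
  rcases eq_or_ne Q ⊤ with htop | hfin
  · simp [htop, hM0]
  have hpoint : ∀ r, ρ < r →
      |v r| ^ (6 : ℝ) * r ^ 3 ≤ (2 * M) ^ 2 * Q.toReal * v r ^ 2 := by
    intro r hr
    have hr0 := hρ.trans hr
    have hamp : r ^ 2 * v r ^ 2 ≤ M ^ 2 := by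
      have := (le_div_iff₀ hr0).1 (hM r hr)
      rw [← sq_abs (v r), ← mul_pow, mul_comm]
      gcongr
    calc |v r| ^ (6 : ℝ) * r ^ 3 = r ^ 2 * v r ^ 2 * (r * v r ^ 2) * v r ^ 2 := by
          rw [← Nat.cast_ofNat (n := 6), abs_rpow_of_even (by decide)]
          ring
      _ ≤ M ^ 2 * (2 * Q.toReal) * v r ^ 2 := by
          gcongr ?_ * ?_ * _
          exact mul_sq_le_toReal_lintegral_bulkForm hρ hv hM hfin hr
      _ ≤ (2 * M) ^ 2 * Q.toReal * v r ^ 2 := by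
          gcongr ?_ * _
          nlinarith [mul_nonneg (sq_nonneg M) (ENNReal.toReal_nonneg (a := Q))]
  calc _ ≤ (ENNReal.ofReal ((2 * M) ^ 2 * Q.toReal) * Q) ^ ((3 : ℝ) / 6) := by
        gcongr
        exact lintegral_le_ofReal_mul_lintegral_bulkForm (by positivity) hpoint
    _ = ((ENNReal.ofReal (2 * M) * Q) ^ 2) ^ ((3 : ℝ) / 6) := by
        rw [ENNReal.ofReal_mul (by positivity), ENNReal.ofReal_toReal hfin,
          ENNReal.ofReal_pow (by positivity), mul_assoc, ← sq, ← mul_pow]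
    _ = ENNReal.ofReal (2 * M) * Q := by
        rw [← ENNReal.rpow_natCast, ← ENNReal.rpow_mul]
        norm_num

end SliceStrichartz

/-! ### Energy and flux densities -/

/-- The energy density `½ r³ (w² + d²)` of a radial field with value `v`, time derivative `w` and
radial derivative `d` at radius `r`, modified by the divergence `∂_r(¾ r² v²)`. The modification
makes it a sum of squares in terms of `r w`, `∂_r(r^{3/2} v) / r^{1/2}` and `v`. -/
noncomputable def energyForm (r v w d : ℝ) : ℝ :=
  1 / 2 * r * ((r * w) ^ 2 + (r * d + 3 / 2 * v) ^ 2 + 3 / 4 * v ^ 2)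

/-- The radial flux belonging to `energyForm`: for a free wave `∂_t energy = ∂_r flux`. -/
noncomputable def fluxForm (r v w d : ℝ) : ℝ :=
  r * (r * w) * (r * d + 3 / 2 * v)

section Densities

variable {r v w d : ℝ}

theorem energyForm_nonneg (hr : 0 ≤ r) : 0 ≤ energyForm r v w d := by
  unfold energyForm
  positivity

theorem energyForm_sub_fluxForm_nonneg (hr : 0 ≤ r) :
    0 ≤ energyForm r v w d - fluxForm r v w d := by
  have hsq : energyForm r v w d - fluxForm r v w d
      = 1 / 2 * r * ((r * w - (r * d + 3 / 2 * v)) ^ 2 + 3 / 4 * v ^ 2) := by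
    unfold energyForm fluxForm
    ring
  rw [hsq]
  positivity

theorem energyForm_add_fluxForm_nonneg (hr : 0 ≤ r) :
    0 ≤ energyForm r v w d + fluxForm r v w d := by
  have hsq : energyForm r v w d + fluxForm r v w d
      = 1 / 2 * r * ((r * w + (r * d + 3 / 2 * v)) ^ 2 + 3 / 4 * v ^ 2) := by
    unfold energyForm fluxForm
    ring
  rw [hsq]
  positivity

theorem cube_mul_sq_add_sq_le_energyForm (hr : 0 ≤ r) :
    (d ^ 2 + w ^ 2) * r ^ 3 ≤ 8 * energyForm r v w d := by
  have hsq : 8 * energyForm r v w d - (d ^ 2 + w ^ 2) * r ^ 3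
      = r * (3 * (r * w) ^ 2 + 3 * (r * d + 2 * v) ^ 2) := by
    unfold energyForm
    ring
  linarith [show 0 ≤ r * (3 * (r * w) ^ 2 + 3 * (r * d + 2 * v) ^ 2) by positivity]

theorem energyForm_le_cube_mul_sq_add_sq (hr : 0 ≤ r) :
    energyForm r v w d ≤ 5 / 4 * ((d ^ 2 + w ^ 2) * r ^ 3) + 9 / 4 * (r * v ^ 2) := by
  have hsq : 5 / 4 * ((d ^ 2 + w ^ 2) * r ^ 3) + 9 / 4 * (r * v ^ 2) - energyForm r v w d
      = 3 / 4 * (r * ((r * w) ^ 2 + (r * d - v) ^ 2)) := by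
    unfold energyForm
    ring
  linarith [show 0 ≤ 3 / 4 * (r * ((r * w) ^ 2 + (r * d - v) ^ 2)) by positivity]

theorem two_mul_abs_mul_le {φ x y : ℝ} (hφ : 0 < φ) :
    2 * |x * y| ≤ 2 * φ * x ^ 2 + 1 / 2 * φ⁻¹ * y ^ 2 := by
  have hsq : 2 * φ * |x| ^ 2 + 1 / 2 * φ⁻¹ * |y| ^ 2 - 2 * (|x| * |y|)
      = 2 * φ * (|x| - 1 / 2 * φ⁻¹ * |y|) ^ 2 := by
    field_simp
    ring
  rw [abs_mul, ← sq_abs x, ← sq_abs y]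
  linarith [show 0 ≤ 2 * φ * (|x| - 1 / 2 * φ⁻¹ * |y|) ^ 2 by positivity]

theorem bulkForm_le_weighted_energyForm {φ : ℝ} (hr : 0 ≤ r) (hφ : 0 < φ) (hφ1 : φ ≤ 1) :
    r / 8 * bulkForm r v d ≤ φ * (energyForm r v w d - fluxForm r v w d)
      + φ⁻¹ * (energyForm r v w d + fluxForm r v w d) := by
  set x := r * d + 3 / 2 * v with hx
  have hexpand : φ * (energyForm r v w d - fluxForm r v w d)
      + φ⁻¹ * (energyForm r v w d + fluxForm r v w d)
      = r / 2 * ((2 * φ * x ^ 2 + 1 / 2 * φ⁻¹ * v ^ 2) + 2 * φ * (r * w) ^ 2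
        + (φ⁻¹ - φ) * (x + r * w) ^ 2 + 3 / 4 * φ * v ^ 2 + 1 / 4 * φ⁻¹ * v ^ 2) := by
    simp only [energyForm, fluxForm, ← hx]
    ring
  have hbulk : r / 8 * bulkForm r v d = r / 2 * (1 / 4 * |x * v| + 1 / 4 * v ^ 2) := by
    rw [bulkForm, show r * v * d + 3 / 2 * v ^ 2 = x * v by rw [hx]; ring]
    ring
  have hinv : 1 ≤ φ⁻¹ := (one_le_inv₀ hφ).2 hφ1
  rw [hexpand, hbulk]
  refine mul_le_mul_of_nonneg_left ?_ (by positivity)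
  have hamgm := two_mul_abs_mul_le (x := x) (y := v) hφ
  have hcross : 0 ≤ (φ⁻¹ - φ) * (x + r * w) ^ 2 := mul_nonneg (by linarith) (sq_nonneg _)
  have hv : 1 / 4 * v ^ 2 ≤ 1 / 4 * φ⁻¹ * v ^ 2 := by
    linarith [mul_nonneg (sub_nonneg.2 hinv) (sq_nonneg v)]
  have hw : 0 ≤ 2 * φ * (r * w) ^ 2 + 3 / 4 * φ * v ^ 2 := by positivity
  linarith [abs_nonneg (x * v)]

theorem cube_mul_forcing_le_energyForm {R t μ : ℝ} (q : ℕ) (hR : 0 < R) (ht : 0 ≤ t)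
    (hr : R + t ≤ r) (hμ : r * |v| ≤ μ) :
    r ^ 3 * w * (|v| ^ (q + 3) * v)
      ≤ 3 * μ ^ (q + 3) / R ^ q / (R + t) ^ 2 * energyForm r v w d := by
  have hRt : 0 < R + t := by positivity
  have hr0 : 0 < r := hRt.trans_le hr
  have hquad : r ^ 2 * w * v ≤ 3 * energyForm r v w d := by
    have hsq : 3 * energyForm r v w d - r ^ 2 * w * v
        = 1 / 2 * r * (2 * (r * w) ^ 2 + (r * w - v) ^ 2 + 3 * (r * d + 3 / 2 * v) ^ 2
          + 5 / 4 * v ^ 2) := by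
      unfold energyForm
      ring
    linarith [show 0 ≤ 1 / 2 * r * (2 * (r * w) ^ 2 + (r * w - v) ^ 2
      + 3 * (r * d + 3 / 2 * v) ^ 2 + 5 / 4 * v ^ 2) by positivity]
  have hpow : R ^ q * (R + t) ^ 2 ≤ r ^ (q + 2) := by
    rw [pow_add]
    gcongr
    linarith
  have henergy : 0 ≤ energyForm r v w d := energyForm_nonneg hr0.le
  have hμ0 : 0 ≤ μ := (by positivity : 0 ≤ r * |v|).trans hμ
  calc r ^ 3 * w * (|v| ^ (q + 3) * v)
      = r ^ 2 * w * v * ((r * |v|) ^ (q + 3) / r ^ (q + 2)) := by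
        field_simp
        ring
    _ ≤ 3 * energyForm r v w d * (μ ^ (q + 3) / (R ^ q * (R + t) ^ 2)) := by gcongr
    _ = _ := by field_simp

end Densities

/-! ### Calculus in the exterior region -/

/-- The radial derivative `∂_r u` of a function of `(t, r)`. -/
noncomputable def dru (u : ℝ → ℝ → ℝ) (t r : ℝ) : ℝ := deriv (u t) r

/-- The exterior `{r > R + |t|}` of the light cone, as a set of pairs `(t, r)`. -/
def extRegion (R : ℝ) : Set (ℝ × ℝ) := {q | R + |q.1| < q.2}

theorem isOpen_extRegion (R : ℝ) : IsOpen (extRegion R) :=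
  isOpen_lt (by fun_prop) (by fun_prop)

theorem mem_extRegion_of_lt {R t r : ℝ} (ht : 0 ≤ t) (hr : R + t < r) : (t, r) ∈ extRegion R := by
  rwa [extRegion, mem_ofPred_eq, abs_of_nonneg ht]

section Calculus

variable {R : ℝ} {W : ℝ → ℝ → ℝ} {n : WithTop ℕ∞} {t r : ℝ}

theorem differentiableAt_of_mem_extRegion
    (hW : ContDiffOn ℝ 1 (Function.uncurry W) (extRegion R)) (hq : (t, r) ∈ extRegion R) :
    DifferentiableAt ℝ (Function.uncurry W) (t, r) :=
  (hW.differentiableOn one_ne_zero).differentiableAt ((isOpen_extRegion R).mem_nhds hq)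

theorem hasDerivAt_left_of_differentiableAt
    (hW : DifferentiableAt ℝ (Function.uncurry W) (t, r)) :
    HasDerivAt (fun s => W s r) (fderiv ℝ (Function.uncurry W) (t, r) (1, 0)) t :=
  hW.hasFDerivAt.comp_hasDerivAt (f := fun s => (s, r)) t
    ((hasDerivAt_id t).prodMk (hasDerivAt_const t r))

theorem hasDerivAt_right_of_differentiableAt
    (hW : DifferentiableAt ℝ (Function.uncurry W) (t, r)) :
    HasDerivAt (W t) (fderiv ℝ (Function.uncurry W) (t, r) (0, 1)) r :=
  hW.hasFDerivAt.comp_hasDerivAt (f := fun s => (t, s)) r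
    ((hasDerivAt_const r t).prodMk (hasDerivAt_id r))

theorem hasDerivAt_dtu (hW : ContDiffOn ℝ 1 (Function.uncurry W) (extRegion R))
    (hq : (t, r) ∈ extRegion R) : HasDerivAt (fun s => W s r) (dtu W t r) t :=
  (hasDerivAt_left_of_differentiableAt
    (differentiableAt_of_mem_extRegion hW hq)).differentiableAt.hasDerivAt

theorem hasDerivAt_dru (hW : ContDiffOn ℝ 1 (Function.uncurry W) (extRegion R))
    (hq : (t, r) ∈ extRegion R) : HasDerivAt (W t) (dru W t r) r :=
  (hasDerivAt_right_of_differentiableAt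
    (differentiableAt_of_mem_extRegion hW hq)).differentiableAt.hasDerivAt

theorem uncurry_dtu_eqOn_fderiv (hW : ContDiffOn ℝ 1 (Function.uncurry W) (extRegion R)) :
    EqOn (Function.uncurry (dtu W)) (fun q => fderiv ℝ (Function.uncurry W) q (1, 0))
      (extRegion R) := fun _ hq =>
  (hasDerivAt_left_of_differentiableAt (differentiableAt_of_mem_extRegion hW hq)).deriv

theorem uncurry_dru_eqOn_fderiv (hW : ContDiffOn ℝ 1 (Function.uncurry W) (extRegion R)) :
    EqOn (Function.uncurry (dru W)) (fun q => fderiv ℝ (Function.uncurry W) q (0, 1))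
      (extRegion R) := fun _ hq =>
  (hasDerivAt_right_of_differentiableAt (differentiableAt_of_mem_extRegion hW hq)).deriv

theorem contDiffOn_dtu (hW : ContDiffOn ℝ (n + 1) (Function.uncurry W) (extRegion R)) :
    ContDiffOn ℝ n (Function.uncurry (dtu W)) (extRegion R) :=
  ((hW.fderiv_of_isOpen (isOpen_extRegion R) le_rfl).clm_apply contDiffOn_const).congr
    (uncurry_dtu_eqOn_fderiv (hW.of_le le_add_self))

theorem contDiffOn_dru (hW : ContDiffOn ℝ (n + 1) (Function.uncurry W) (extRegion R)) :
    ContDiffOn ℝ n (Function.uncurry (dru W)) (extRegion R) :=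
  ((hW.fderiv_of_isOpen (isOpen_extRegion R) le_rfl).clm_apply contDiffOn_const).congr
    (uncurry_dru_eqOn_fderiv (hW.of_le le_add_self))

theorem dtu_dru_eq_dru_dtu (hW : ContDiffOn ℝ 2 (Function.uncurry W) (extRegion R))
    (hq : (t, r) ∈ extRegion R) : dtu (dru W) t r = dru (dtu W) t r := by
  have hmem := (isOpen_extRegion R).mem_nhds hq
  have hW1 : ContDiffOn ℝ 1 (Function.uncurry W) (extRegion R) := hW.of_le one_le_two
  have hfd : DifferentiableAt ℝ (fderiv ℝ (Function.uncurry W)) (t, r) :=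
    ((hW.contDiffAt hmem).fderiv_right (m := 1) (by norm_num)).differentiableAt one_ne_zero
  have happly (x : ℝ × ℝ) :
      HasFDerivAt (fun q => fderiv ℝ (Function.uncurry W) q x)
        ((fderiv ℝ (fderiv ℝ (Function.uncurry W)) (t, r)).flip x) (t, r) := by
    simpa using hfd.hasFDerivAt.clm_apply (hasFDerivAt_const x (t, r))
  have hdru := (happly (0, 1)).congr_of_eventuallyEq
    ((uncurry_dru_eqOn_fderiv hW1).eventuallyEq_of_mem hmem)
  have hdtu := (happly (1, 0)).congr_of_eventuallyEq
    ((uncurry_dtu_eqOn_fderiv hW1).eventuallyEq_of_mem hmem)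
  have hleft := (hasDerivAt_left_of_differentiableAt hdru.differentiableAt).deriv
  have hright := (hasDerivAt_right_of_differentiableAt hdtu.differentiableAt).deriv
  rw [hdru.fderiv] at hleft
  rw [hdtu.fderiv] at hright
  have hsymm := (hW.contDiffAt hmem).isSymmSndFDerivAt (by simp)
  exact hleft.trans ((hsymm (1, 0) (0, 1)).trans hright.symm)

end Calculus

/-- The shear `(τ, ξ) ↦ (τ, ξ + τ)`, which straightens the outgoing light rays `r = ξ + t`. -/
def coneShear : ℝ × ℝ →L[ℝ] ℝ × ℝ :=
  (ContinuousLinearMap.fst ℝ ℝ ℝ).prod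
    (ContinuousLinearMap.snd ℝ ℝ ℝ + ContinuousLinearMap.fst ℝ ℝ ℝ)

@[simp]
theorem coneShear_apply (τ ξ : ℝ) : coneShear (τ, ξ) = (τ, ξ + τ) := rfl

theorem mapsTo_coneShear {R s a : ℝ} (hs : 0 ≤ s) (ha : R < a) :
    MapsTo coneShear (Ici s ×ˢ Ici a) (extRegion R) := fun _ hq =>
  mem_extRegion_of_lt (hs.trans hq.1) (add_lt_add_left (ha.trans_le hq.2) _)

section Divergence

variable {R s T a b : ℝ} {W Y N : ℝ → ℝ → ℝ}

theorem mapsTo_coneShear_uIcc (hs : 0 ≤ s) (hsT : s ≤ T) (ha : R < a) (hab : a ≤ b) :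
    MapsTo coneShear (uIcc s T ×ˢ uIcc a b) (extRegion R) := by
  rw [uIcc_of_le hsT, uIcc_of_le hab]
  exact (mapsTo_coneShear hs ha).mono_left (prod_mono Icc_subset_Ici_self Icc_subset_Ici_self)

theorem continuousOn_comp_coneShear (hN : ContinuousOn (Function.uncurry N) (extRegion R))
    (hs : 0 ≤ s) (hsT : s ≤ T) (ha : R < a) (hab : a ≤ b) :
    ContinuousOn (fun q => Function.uncurry N (coneShear q)) (uIcc s T ×ˢ uIcc a b) :=
  hN.comp coneShear.continuous.continuousOn (mapsTo_coneShear_uIcc hs hsT ha hab)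

theorem intervalIntegrable_integral_coneShear
    (hN : ContinuousOn (Function.uncurry N) (extRegion R))
    (hs : 0 ≤ s) (hsT : s ≤ T) (ha : R < a) (hab : a ≤ b) :
    IntervalIntegrable (fun τ => ∫ ξ in a..b, N τ (ξ + τ)) volume s T := by
  have hcont := continuousOn_comp_coneShear hN hs hsT ha hab
  rw [uIcc_of_le hsT, uIcc_of_le hab] at hcont
  exact intervalIntegrable_intervalIntegral hsT hab (N := fun τ ξ => N τ (ξ + τ)) hcont

theorem intervalIntegrable_slice (hab : a ≤ b)
    (hN : ContinuousOn (Function.uncurry N) (Icc s T ×ˢ Icc a b)) {τ : ℝ} (hτ : τ ∈ Icc s T) :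
    IntervalIntegrable (N τ) volume a b :=
  (hN.comp (f := fun ξ => (τ, ξ)) (by fun_prop) fun _ hξ =>
    mk_mem_prod hτ hξ).intervalIntegrable_of_Icc hab

theorem intervalIntegrable_slice_coneShear
    (hN : ContinuousOn (Function.uncurry N) (extRegion R)) {t : ℝ} (ht : 0 ≤ t) (ha : R < a)
    (hab : a ≤ b) : IntervalIntegrable (fun ξ => N t (ξ + t)) volume a b :=
  ((continuousOn_comp_coneShear hN ht le_rfl ha hab).comp (f := fun ξ => (t, ξ)) (by fun_prop)
    fun _ hξ => mk_mem_prod left_mem_uIcc hξ).intervalIntegrable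

theorem hasFDerivAt_comp_coneShear (hW : ContDiffOn ℝ 1 (Function.uncurry W) (extRegion R))
    {q : ℝ × ℝ} (hq : coneShear q ∈ extRegion R) :
    HasFDerivAt (fun q => Function.uncurry W (coneShear q))
      ((fderiv ℝ (Function.uncurry W) (coneShear q)).comp coneShear) q :=
  HasFDerivAt.comp (g := Function.uncurry W) q
    (differentiableAt_of_mem_extRegion hW hq).hasFDerivAt coneShear.hasFDerivAt

theorem fderiv_comp_coneShear_apply (hW : ContDiffOn ℝ 1 (Function.uncurry W) (extRegion R))
    {q : ℝ × ℝ} (hq : coneShear q ∈ extRegion R) (x y : ℝ) :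
    (fderiv ℝ (Function.uncurry W) (coneShear q)).comp coneShear (x, y)
      = x * dtu W q.1 (q.2 + q.1) + (y + x) * dru W q.1 (q.2 + q.1) := by
  have hdt : fderiv ℝ (Function.uncurry W) (coneShear q) (1, 0) = dtu W q.1 (q.2 + q.1) :=
    (uncurry_dtu_eqOn_fderiv hW hq).symm
  have hdr : fderiv ℝ (Function.uncurry W) (coneShear q) (0, 1) = dru W q.1 (q.2 + q.1) :=
    (uncurry_dru_eqOn_fderiv hW hq).symm
  have hdecomp : coneShear (x, y) = x • ((1, 0) : ℝ × ℝ) + (y + x) • ((0, 1) : ℝ × ℝ) := by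
    simp
  rw [ContinuousLinearMap.comp_apply, hdecomp, map_add, map_smul, map_smul, hdt, hdr,
    smul_eq_mul, smul_eq_mul]

theorem integral_coneShear_divergence
    (hW : ContDiffOn ℝ 1 (Function.uncurry W) (extRegion R))
    (hY : ContDiffOn ℝ 1 (Function.uncurry Y) (extRegion R))
    (hs : 0 ≤ s) (hsT : s ≤ T) (ha : R < a) (hab : a ≤ b) :
    ∫ τ in s..T, ∫ ξ in a..b, (dtu W τ (ξ + τ) - dru Y τ (ξ + τ))
      = (∫ ξ in a..b, W T (ξ + T)) - (∫ ξ in a..b, W s (ξ + s))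
        + (∫ τ in s..T, (W τ (a + τ) + Y τ (a + τ)))
        - ∫ τ in s..T, (W τ (b + τ) + Y τ (b + τ)) := by
  set f' := fun q => (fderiv ℝ (Function.uncurry W) (coneShear q)).comp coneShear with hf'
  set g' := fun q => -(f' q + (fderiv ℝ (Function.uncurry Y) (coneShear q)).comp coneShear)
    with hg'
  have hmaps := mapsTo_coneShear_uIcc hs hsT ha hab
  have hinterior : Ioo (min s T) (max s T) ×ˢ Ioo (min a b) (max a b) ⊆ uIcc s T ×ˢ uIcc a b :=
    prod_mono Ioo_subset_Icc_self Ioo_subset_Icc_self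
  have hWc := continuousOn_comp_coneShear hW.continuousOn hs hsT ha hab
  have hYc := continuousOn_comp_coneShear hY.continuousOn hs hsT ha hab
  have hdiv : EqOn (fun q => f' q (1, 0) + g' q (0, 1))
      (fun q => dtu W q.1 (q.2 + q.1) - dru Y q.1 (q.2 + q.1)) (uIcc s T ×ˢ uIcc a b) := by
    intro q hq
    simp only [hf', hg', neg_apply, add_apply,
      fderiv_comp_coneShear_apply hW (hmaps hq), fderiv_comp_coneShear_apply hY (hmaps hq)]
    ring
  have hdiv_cont : ContinuousOn (fun q => f' q (1, 0) + g' q (0, 1)) (uIcc s T ×ˢ uIcc a b) :=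
    ((continuousOn_comp_coneShear (contDiffOn_dtu (n := 0) hW).continuousOn hs hsT ha hab).sub
      (continuousOn_comp_coneShear (contDiffOn_dru (n := 0) hY).continuousOn hs hsT ha hab)).congr
      hdiv
  have hmain := integral2_divergence_prod_of_hasFDerivAt
    (fun q => Function.uncurry W (coneShear q))
    (fun q => -(Function.uncurry W (coneShear q) + Function.uncurry Y (coneShear q)))
    f' g' s a T b hWc (hWc.add hYc).neg
    (fun q hq => hasFDerivAt_comp_coneShear hW (hmaps (hinterior hq)))
    (fun q hq => ((hasFDerivAt_comp_coneShear hW (hmaps (hinterior hq))).add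
      (hasFDerivAt_comp_coneShear hY (hmaps (hinterior hq)))).neg)
    (hdiv_cont.integrableOn_compact (isCompact_uIcc.prod isCompact_uIcc))
  simp only [intervalIntegral.integral_neg, Function.uncurry_apply_pair, coneShear_apply] at hmain
  rw [intervalIntegral.integral_congr fun τ hτ =>
    intervalIntegral.integral_congr fun ξ hξ => (hdiv (mk_mem_prod hτ hξ)).symm, hmain]
  ring

theorem integral_sub_integral_le_of_divergence_le
    (hW : ContDiffOn ℝ 1 (Function.uncurry W) (extRegion R))
    (hY : ContDiffOn ℝ 1 (Function.uncurry Y) (extRegion R))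
    (hN : ContinuousOn (Function.uncurry N) (Icc s T ×ˢ Icc a b))
    (hs : 0 ≤ s) (hsT : s ≤ T) (ha : R < a) (hab : a ≤ b)
    (hinner : ∀ τ ∈ Icc s T, 0 ≤ W τ (a + τ) + Y τ (a + τ))
    (houter : ∀ τ ∈ Icc s T, W τ (b + τ) + Y τ (b + τ) ≤ 0)
    (hle : ∀ τ ∈ Icc s T, ∀ ξ ∈ Icc a b, dtu W τ (ξ + τ) - dru Y τ (ξ + τ) ≤ N τ ξ) :
    (∫ ξ in a..b, W T (ξ + T)) - (∫ ξ in a..b, W s (ξ + s))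
      ≤ ∫ τ in s..T, ∫ ξ in a..b, N τ ξ := by
  set D := fun τ r => dtu W τ r - dru Y τ r
  have hD : ContinuousOn (Function.uncurry D) (extRegion R) :=
    (contDiffOn_dtu (n := 0) hW).continuousOn.sub (contDiffOn_dru (n := 0) hY).continuousOn
  have hmono : ∫ τ in s..T, ∫ ξ in a..b, D τ (ξ + τ) ≤ ∫ τ in s..T, ∫ ξ in a..b, N τ ξ :=
    intervalIntegral.integral_mono_on hsT
      (intervalIntegrable_integral_coneShear hD hs hsT ha hab)
      (intervalIntegrable_intervalIntegral hsT hab hN) fun τ hτ =>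
        intervalIntegral.integral_mono_on hab
          (intervalIntegrable_slice_coneShear hD (hs.trans hτ.1) ha hab)
          (intervalIntegrable_slice hab hN hτ) (hle τ hτ)
  have hflux_inner := intervalIntegral.integral_nonneg (μ := volume) hsT hinner
  have hflux_outer := intervalIntegral.integral_nonneg (μ := volume) hsT
    fun τ hτ => neg_nonneg.2 (houter τ hτ)
  rw [intervalIntegral.integral_neg] at hflux_outer
  linarith [integral_coneShear_divergence hW hY hs hsT ha hab]

end Divergence

/-! ### The local energy identity -/

/-- The energy density `energyForm` of `u` at `(t, r)`. -/
noncomputable def energyDensity (u : ℝ → ℝ → ℝ) (t r : ℝ) : ℝ :=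
  energyForm r (u t r) (dtu u t r) (dru u t r)

/-- The energy flux `fluxForm` of `u` at `(t, r)`. -/
noncomputable def fluxDensity (u : ℝ → ℝ → ℝ) (t r : ℝ) : ℝ :=
  fluxForm r (u t r) (dtu u t r) (dru u t r)

/-- The Morawetz density `bulkForm` of `u` at `(t, r)`. -/
noncomputable def bulkDensity (u : ℝ → ℝ → ℝ) (t r : ℝ) : ℝ :=
  bulkForm r (u t r) (dru u t r)

/-- The radial wave operator `∂_t² - ∂_r² - (3/r) ∂_r` of four space dimensions. -/
noncomputable def waveOp (u : ℝ → ℝ → ℝ) (t r : ℝ) : ℝ :=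
  dtu (dtu u) t r - dru (dru u) t r - 3 / r * dru u t r

section LocalIdentity

variable {R t r : ℝ} {u : ℝ → ℝ → ℝ}

theorem contDiffOn_one_dtu (hu : ContDiffOn ℝ 2 (Function.uncurry u) (extRegion R)) :
    ContDiffOn ℝ 1 (Function.uncurry (dtu u)) (extRegion R) :=
  contDiffOn_dtu (by rwa [one_add_one_eq_two])

theorem contDiffOn_one_dru (hu : ContDiffOn ℝ 2 (Function.uncurry u) (extRegion R)) :
    ContDiffOn ℝ 1 (Function.uncurry (dru u)) (extRegion R) :=
  contDiffOn_dru (by rwa [one_add_one_eq_two])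

theorem contDiffOn_energyDensity (hu : ContDiffOn ℝ 2 (Function.uncurry u) (extRegion R)) :
    ContDiffOn ℝ 1 (Function.uncurry (energyDensity u)) (extRegion R) := by
  have hv : ContDiffOn ℝ 1 (fun q : ℝ × ℝ => u q.1 q.2) (extRegion R) := hu.of_le one_le_two
  have hw : ContDiffOn ℝ 1 (fun q : ℝ × ℝ => dtu u q.1 q.2) (extRegion R) :=
    contDiffOn_one_dtu hu
  have hd : ContDiffOn ℝ 1 (fun q : ℝ × ℝ => dru u q.1 q.2) (extRegion R) :=
    contDiffOn_one_dru hu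
  simp only [Function.uncurry_def, energyDensity, energyForm]
  fun_prop

theorem contDiffOn_fluxDensity (hu : ContDiffOn ℝ 2 (Function.uncurry u) (extRegion R)) :
    ContDiffOn ℝ 1 (Function.uncurry (fluxDensity u)) (extRegion R) := by
  have hv : ContDiffOn ℝ 1 (fun q : ℝ × ℝ => u q.1 q.2) (extRegion R) := hu.of_le one_le_two
  have hw : ContDiffOn ℝ 1 (fun q : ℝ × ℝ => dtu u q.1 q.2) (extRegion R) :=
    contDiffOn_one_dtu hu
  have hd : ContDiffOn ℝ 1 (fun q : ℝ × ℝ => dru u q.1 q.2) (extRegion R) :=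
    contDiffOn_one_dru hu
  simp only [Function.uncurry_def, fluxDensity, fluxForm]
  fun_prop

theorem continuousOn_bulkDensity (hu : ContDiffOn ℝ 1 (Function.uncurry u) (extRegion R)) :
    ContinuousOn (Function.uncurry (bulkDensity u)) (extRegion R) := by
  have hv : ContinuousOn (fun q : ℝ × ℝ => u q.1 q.2) (extRegion R) := hu.continuousOn
  have hd : ContinuousOn (fun q : ℝ × ℝ => dru u q.1 q.2) (extRegion R) :=
    (contDiffOn_dru (n := 0) hu).continuousOn
  simp only [Function.uncurry_def, bulkDensity, bulkForm]
  fun_prop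

theorem dtu_energyDensity_sub_dru_fluxDensity (hR : 0 ≤ R)
    (hu : ContDiffOn ℝ 2 (Function.uncurry u) (extRegion R)) (hq : (t, r) ∈ extRegion R) :
    dtu (energyDensity u) t r - dru (fluxDensity u) t r = r ^ 3 * dtu u t r * waveOp u t r := by
  have hr : 0 < r := (add_nonneg hR (abs_nonneg t)).trans_lt hq
  have hu1 : ContDiffOn ℝ 1 (Function.uncurry u) (extRegion R) := hu.of_le one_le_two
  have hvt := hasDerivAt_dtu hu1 hq
  have hwt := hasDerivAt_dtu (contDiffOn_one_dtu hu) hq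
  have hdt := hasDerivAt_dtu (contDiffOn_one_dru hu) hq
  have hvr := hasDerivAt_dru hu1 hq
  have hwr := hasDerivAt_dru (contDiffOn_one_dtu hu) hq
  have hdr := hasDerivAt_dru (contDiffOn_one_dru hu) hq
  have henergy : HasDerivAt (fun s => energyDensity u s r) _ t :=
    ((((hwt.const_mul r).fun_pow 2).fun_add
      (((hdt.const_mul r).fun_add (hvt.const_mul (3 / 2))).fun_pow 2)).fun_add
      ((hvt.fun_pow 2).const_mul (3 / 4))).const_mul (1 / 2 * r)
  have hflux : HasDerivAt (fluxDensity u t) _ r :=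
    ((hasDerivAt_id r).fun_mul ((hasDerivAt_id r).fun_mul hwr)).fun_mul
      (((hasDerivAt_id r).fun_mul hdr).fun_add (hvr.const_mul (3 / 2)))
  rw [dtu, dru, henergy.deriv, hflux.deriv, dtu_dru_eq_dru_dtu hu hq, waveOp]
  simp only [id_eq]
  field_simp
  ring

end LocalIdentity

/-! ### The Morawetz weight -/

/-- The ratio `√((r - t) / (r + t))` of the null coordinates. -/
noncomputable def nullRatio (t r : ℝ) : ℝ := √((r - t) / (r + t))

/-- A smooth cutoff to `{r + t < L}`, equal to one on `{r + t ≤ L - 1}`. -/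
noncomputable def nullCutoff (L t r : ℝ) : ℝ := Real.smoothTransition (L - (r + t))

/-- The multiplier `1 + √((r - t) / (r + t))`, cut off along the incoming light rays. -/
noncomputable def morawetzWeight (L t r : ℝ) : ℝ := nullCutoff L t r * (1 + nullRatio t r)

section Weight

variable {R L t r : ℝ}

theorem nullCutoff_nonneg (L t r : ℝ) : 0 ≤ nullCutoff L t r := Real.smoothTransition.nonneg _

theorem nullCutoff_le_one (L t r : ℝ) : nullCutoff L t r ≤ 1 := Real.smoothTransition.le_one _

theorem nullCutoff_eq_zero (h : L ≤ r + t) : nullCutoff L t r = 0 :=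
  Real.smoothTransition.zero_of_nonpos (by linarith)

theorem nullCutoff_eq_one (h : r + t + 1 ≤ L) : nullCutoff L t r = 1 :=
  Real.smoothTransition.one_of_one_le (by linarith)

theorem contDiff_nullCutoff (L : ℝ) : ContDiff ℝ 1 (Function.uncurry (nullCutoff L)) :=
  Real.smoothTransition.contDiff.comp (by fun_prop)

theorem deriv_smoothTransition_nonneg (x : ℝ) : 0 ≤ deriv Real.smoothTransition x :=
  Real.smoothTransition.monotone.deriv_nonneg

theorem abs_lt_of_mem_extRegion (hR : 0 ≤ R) (hq : (t, r) ∈ extRegion R) : |t| < r :=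
  (le_add_of_nonneg_left hR).trans_lt hq

theorem nullRatio_pos (h : |t| < r) : 0 < nullRatio t r := by
  obtain ⟨hneg, hpos⟩ := abs_lt.1 h
  exact Real.sqrt_pos.2 (div_pos (by linarith) (by linarith))

theorem nullRatio_le_one (ht : 0 ≤ t) (h : |t| < r) : nullRatio t r ≤ 1 := by
  obtain ⟨hneg, -⟩ := abs_lt.1 h
  exact Real.sqrt_le_one.2 ((div_le_one (by linarith)).2 (by linarith))

theorem nullRatio_sq_mul (h : |t| < r) : nullRatio t r ^ 2 * (r + t) = r - t := by
  obtain ⟨hneg, hpos⟩ := abs_lt.1 h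
  have hplus : 0 < r + t := by linarith
  rw [nullRatio, Real.sq_sqrt (div_nonneg (by linarith) hplus.le), div_mul_cancel₀ _ hplus.ne']

theorem morawetzWeight_nonneg (h : |t| < r) : 0 ≤ morawetzWeight L t r :=
  mul_nonneg (nullCutoff_nonneg L t r) (by linarith [nullRatio_pos h])

theorem morawetzWeight_le_two (ht : 0 ≤ t) (h : |t| < r) : morawetzWeight L t r ≤ 2 :=
  (mul_le_of_le_one_left (by linarith [nullRatio_pos h]) (nullCutoff_le_one L t r)).trans
    (by linarith [nullRatio_le_one ht h])

theorem morawetzWeight_eq_zero (hL : L ≤ r + t) : morawetzWeight L t r = 0 := by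
  rw [morawetzWeight, nullCutoff_eq_zero hL, zero_mul]

theorem one_le_morawetzWeight (h : |t| < r) (hL : r + t + 1 ≤ L) : 1 ≤ morawetzWeight L t r := by
  rw [morawetzWeight, nullCutoff_eq_one hL]
  linarith [nullRatio_pos h]

theorem contDiffOn_nullRatio (hR : 0 ≤ R) :
    ContDiffOn ℝ 1 (Function.uncurry nullRatio) (extRegion R) := by
  have hlt (q : ℝ × ℝ) (hq : q ∈ extRegion R) := abs_lt.1 (abs_lt_of_mem_extRegion hR hq)
  have hplus (q : ℝ × ℝ) (hq : q ∈ extRegion R) : q.2 + q.1 ≠ 0 := by linarith [(hlt q hq).1]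
  refine ContDiffOn.sqrt (ContDiffOn.div (by fun_prop) (by fun_prop) hplus) fun q hq => ?_
  exact div_ne_zero (by linarith [(hlt q hq).2]) (hplus q hq)

theorem contDiffOn_morawetzWeight (hR : 0 ≤ R) :
    ContDiffOn ℝ 1 (Function.uncurry (morawetzWeight L)) (extRegion R) :=
  (contDiff_nullCutoff L).contDiffOn.mul (contDiffOn_const.add (contDiffOn_nullRatio hR))

theorem hasDerivAt_nullRatio_left (h : |t| < r) :
    HasDerivAt (fun s => nullRatio s r)
      (-((nullRatio t r + (nullRatio t r)⁻¹) / (2 * (r + t)))) t := by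
  obtain ⟨hneg, hpos⟩ := abs_lt.1 h
  have hplus : r + t ≠ 0 := by linarith
  have hsq := nullRatio_sq_mul h
  have hφ := (nullRatio_pos h).ne'
  have hdiv := ((hasDerivAt_id' t).const_sub r).fun_div ((hasDerivAt_id' t).const_add r) hplus
  refine (hdiv.sqrt (div_pos (by linarith) (by linarith : 0 < r + t)).ne').congr_deriv ?_
  change _ / (2 * nullRatio t r) = _
  field_simp
  linear_combination hsq

theorem hasDerivAt_nullRatio_right (h : |t| < r) :
    HasDerivAt (nullRatio t) (((nullRatio t r)⁻¹ - nullRatio t r) / (2 * (r + t))) r := by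
  obtain ⟨hneg, hpos⟩ := abs_lt.1 h
  have hplus : r + t ≠ 0 := by linarith
  have hsq := nullRatio_sq_mul h
  have hφ := (nullRatio_pos h).ne'
  have hdiv := ((hasDerivAt_id' r).sub_const t).fun_div ((hasDerivAt_id' r).add_const t) hplus
  refine (hdiv.sqrt (div_pos (by linarith) (by linarith : 0 < r + t)).ne').congr_deriv ?_
  change _ / (2 * nullRatio t r) = _
  field_simp
  linear_combination hsq

theorem hasDerivAt_nullCutoff_left (L t r : ℝ) :
    HasDerivAt (fun s => nullCutoff L s r) (-deriv Real.smoothTransition (L - (r + t))) t := by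
  have htransition := (Real.smoothTransition.contDiff (n := 1)).differentiable one_ne_zero
    (L - (r + t))
  exact (htransition.hasDerivAt.comp t
    (((hasDerivAt_id' t).const_add r).const_sub L)).congr_deriv (mul_neg_one _)

theorem hasDerivAt_nullCutoff_right (L t r : ℝ) :
    HasDerivAt (nullCutoff L t) (-deriv Real.smoothTransition (L - (r + t))) r := by
  have htransition := (Real.smoothTransition.contDiff (n := 1)).differentiable one_ne_zero
    (L - (r + t))
  exact (htransition.hasDerivAt.comp r
    (((hasDerivAt_id' r).add_const t).const_sub L)).congr_deriv (mul_neg_one _)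

-- The cutoff is a function of `r + t`, so only the nonnegative combination `E - F` meets its
-- derivative.
theorem dtu_morawetzWeight_mul_sub (h : |t| < r) (E F : ℝ) :
    dtu (morawetzWeight L) t r * E - dru (morawetzWeight L) t r * F
      = -(deriv Real.smoothTransition (L - (r + t)) * (1 + nullRatio t r) * (E - F))
        - nullCutoff L t r * (1 / (2 * (r + t))
          * (nullRatio t r * (E - F) + (nullRatio t r)⁻¹ * (E + F))) := by
  have hleft : HasDerivAt (fun s => morawetzWeight L s r) _ t :=
    (hasDerivAt_nullCutoff_left L t r).fun_mul ((hasDerivAt_nullRatio_left h).const_add 1)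
  have hright : HasDerivAt (morawetzWeight L t) _ r :=
    (hasDerivAt_nullCutoff_right L t r).fun_mul ((hasDerivAt_nullRatio_right h).const_add 1)
  rw [dtu, dru, hleft.deriv, hright.deriv]
  ring

end Weight

/-! ### The weighted energy estimate -/

section WeightedEnergy

variable {R L s T a b t r lam Λ S : ℝ} {u A W : ℝ → ℝ → ℝ}

theorem energyDensity_nonneg (hr : 0 ≤ r) : 0 ≤ energyDensity u t r := energyForm_nonneg hr

theorem bulkDensity_nonneg (u : ℝ → ℝ → ℝ) (t r : ℝ) : 0 ≤ bulkDensity u t r :=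
  bulkForm_nonneg _ _ _

theorem bulkDensity_le_weighted_energyDensity (ht : 0 ≤ t) (h : |t| < r) :
    1 / 32 * bulkDensity u t r ≤ 1 / (2 * (r + t))
      * (nullRatio t r * (energyDensity u t r - fluxDensity u t r)
        + (nullRatio t r)⁻¹ * (energyDensity u t r + fluxDensity u t r)) := by
  have htr : t < r := (le_abs_self t).trans_lt h
  have hr : 0 < r := ht.trans_lt htr
  have hb := bulkDensity_nonneg u t r
  calc 1 / 32 * bulkDensity u t r = 1 / (4 * r) * (r / 8 * bulkDensity u t r) := by
        field_simp
        ring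
    _ ≤ 1 / (2 * (r + t)) * (r / 8 * bulkDensity u t r) :=
        mul_le_mul_of_nonneg_right (one_div_le_one_div_of_le (by linarith) (by linarith))
          (by positivity)
    _ ≤ _ := by
        gcongr
        exact bulkForm_le_weighted_energyForm hr.le (nullRatio_pos h) (nullRatio_le_one ht h)

theorem dtu_mul (hA : ContDiffOn ℝ 1 (Function.uncurry A) (extRegion R))
    (hW : ContDiffOn ℝ 1 (Function.uncurry W) (extRegion R)) (hq : (t, r) ∈ extRegion R) :
    dtu (fun t r => A t r * W t r) t r = dtu A t r * W t r + A t r * dtu W t r :=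
  ((hasDerivAt_dtu hA hq).fun_mul (hasDerivAt_dtu hW hq)).deriv

theorem dru_mul (hA : ContDiffOn ℝ 1 (Function.uncurry A) (extRegion R))
    (hW : ContDiffOn ℝ 1 (Function.uncurry W) (extRegion R)) (hq : (t, r) ∈ extRegion R) :
    dru (fun t r => A t r * W t r) t r = dru A t r * W t r + A t r * dru W t r :=
  ((hasDerivAt_dru hA hq).fun_mul (hasDerivAt_dru hW hq)).deriv

theorem weighted_energy_divergence_le (hR : 0 ≤ R)
    (hu : ContDiffOn ℝ 2 (Function.uncurry u) (extRegion R)) (ht : 0 ≤ t)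
    (hq : (t, r) ∈ extRegion R) (hlam : 0 ≤ lam)
    (hforce : r ^ 3 * dtu u t r * waveOp u t r ≤ lam * energyDensity u t r) :
    dtu (fun t r => morawetzWeight L t r * energyDensity u t r) t r
        - dru (fun t r => morawetzWeight L t r * fluxDensity u t r) t r
      ≤ 2 * lam * energyDensity u t r - 1 / 32 * (nullCutoff L t r * bulkDensity u t r) := by
  have h := abs_lt_of_mem_extRegion hR hq
  have hr : 0 ≤ r := (abs_nonneg t).trans h.le
  have hA := contDiffOn_morawetzWeight (L := L) hR
  rw [dtu_mul hA (contDiffOn_energyDensity hu) hq, dru_mul hA (contDiffOn_fluxDensity hu) hq]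
  have hweight := dtu_morawetzWeight_mul_sub (L := L) h (energyDensity u t r) (fluxDensity u t r)
  have hidentity := dtu_energyDensity_sub_dru_fluxDensity hR hu hq
  have hcutoff : 0 ≤ deriv Real.smoothTransition (L - (r + t)) * (1 + nullRatio t r)
      * (energyDensity u t r - fluxDensity u t r) :=
    mul_nonneg (mul_nonneg (deriv_smoothTransition_nonneg _) (by linarith [nullRatio_pos h]))
      (energyForm_sub_fluxForm_nonneg hr)
  have hbulk := mul_le_mul_of_nonneg_left (bulkDensity_le_weighted_energyDensity (u := u) ht h)
    (nullCutoff_nonneg L t r)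
  have hforcing : morawetzWeight L t r * (r ^ 3 * dtu u t r * waveOp u t r)
      ≤ 2 * (lam * energyDensity u t r) :=
    (mul_le_mul_of_nonneg_left hforce (morawetzWeight_nonneg h)).trans
      (mul_le_mul_of_nonneg_right (morawetzWeight_le_two ht h)
        (mul_nonneg hlam (energyDensity_nonneg hr)))
  rw [← hidentity] at hforcing
  linarith

theorem integral_inv_sq_add (hRs : 0 < R + s) (hsT : s ≤ T) :
    ∫ τ in s..T, ((R + τ) ^ 2)⁻¹ = 1 / (R + s) - 1 / (R + T) := by
  have hpos (τ : ℝ) (hτ : τ ∈ uIcc s T) : R + τ ≠ 0 := by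
    rw [uIcc_of_le hsT] at hτ
    linarith [hτ.1]
  have hderiv (τ : ℝ) (hτ : τ ∈ uIcc s T) :
      HasDerivAt (fun τ => -(R + τ)⁻¹) ((R + τ) ^ 2)⁻¹ τ :=
    (((hasDerivAt_id' τ).const_add R).fun_inv (hpos τ hτ)).fun_neg.congr_deriv (by ring)
  have hcont : ContinuousOn (fun τ => ((R + τ) ^ 2)⁻¹) (uIcc s T) :=
    ContinuousOn.inv₀ (by fun_prop) fun τ hτ => pow_ne_zero 2 (hpos τ hτ)
  rw [intervalIntegral.integral_eq_sub_of_hasDerivAt hderiv hcont.intervalIntegrable]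
  ring

theorem continuousOn_inv_sq_add (hRs : 0 < R + s) :
    ContinuousOn (fun τ => ((R + τ) ^ 2)⁻¹) (Ici s) :=
  ContinuousOn.inv₀ (by fun_prop) fun τ hτ => pow_ne_zero 2 (by linarith [mem_Ici.1 hτ])

theorem integral_integral_inv_sq_mul_sub_le {B E : ℝ → ℝ → ℝ} {c : ℝ} (hRs : 0 < R + s)
    (hsT : s ≤ T) (hab : a ≤ b)
    (hB : ContinuousOn (Function.uncurry B) (Icc s T ×ˢ Icc a b))
    (hE : ContinuousOn (Function.uncurry E) (Icc s T ×ˢ Icc a b))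
    (hS : ∀ τ ∈ Icc s T, ∫ ξ in a..b, E τ ξ ≤ S) :
    ∫ τ in s..T, ∫ ξ in a..b, (((R + τ) ^ 2)⁻¹ * E τ ξ - c * B τ ξ)
      ≤ S * (1 / (R + s) - 1 / (R + T)) - c * ∫ τ in s..T, ∫ ξ in a..b, B τ ξ := by
  have hinv : ContinuousOn (fun τ => ((R + τ) ^ 2)⁻¹) (uIcc s T) :=
    (continuousOn_inv_sq_add hRs).mono (by rw [uIcc_of_le hsT]; exact Icc_subset_Ici_self)
  have hBint := (intervalIntegrable_intervalIntegral hsT hab hB).const_mul c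
  have hinner (τ : ℝ) (hτ : τ ∈ uIcc s T) :
      ∫ ξ in a..b, (((R + τ) ^ 2)⁻¹ * E τ ξ - c * B τ ξ)
        = ((R + τ) ^ 2)⁻¹ * (∫ ξ in a..b, E τ ξ) - c * ∫ ξ in a..b, B τ ξ := by
    rw [uIcc_of_le hsT] at hτ
    rw [intervalIntegral.integral_sub ((intervalIntegrable_slice hab hE hτ).const_mul _)
      ((intervalIntegrable_slice hab hB hτ).const_mul c),
      intervalIntegral.integral_const_mul, intervalIntegral.integral_const_mul]
  calc ∫ τ in s..T, ∫ ξ in a..b, (((R + τ) ^ 2)⁻¹ * E τ ξ - c * B τ ξ)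
      = ∫ τ in s..T, (((R + τ) ^ 2)⁻¹ * (∫ ξ in a..b, E τ ξ) - c * ∫ ξ in a..b, B τ ξ) :=
        intervalIntegral.integral_congr hinner
    _ ≤ ∫ τ in s..T, (((R + τ) ^ 2)⁻¹ * S - c * ∫ ξ in a..b, B τ ξ) :=
        intervalIntegral.integral_mono_on hsT
          (((intervalIntegrable_intervalIntegral hsT hab hE).continuousOn_mul hinv).sub hBint)
          ((hinv.intervalIntegrable.mul_const S).sub hBint) fun τ hτ =>
            sub_le_sub_right (mul_le_mul_of_nonneg_left (hS τ hτ) (by positivity)) _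
    _ = _ := by
        rw [intervalIntegral.integral_sub (hinv.intervalIntegrable.mul_const S) hBint,
          intervalIntegral.integral_const_mul, intervalIntegral.integral_mul_const,
          integral_inv_sq_add hRs hsT, mul_comm S]

theorem continuousOn_nullCutoff_mul_bulkDensity
    (hu : ContDiffOn ℝ 1 (Function.uncurry u) (extRegion R)) :
    ContinuousOn (Function.uncurry fun t r => nullCutoff L t r * bulkDensity u t r)
      (extRegion R) :=
  (contDiff_nullCutoff L).continuous.continuousOn.mul (continuousOn_bulkDensity hu)

theorem weighted_energy_add_flux_nonneg (h : |t| < r) :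
    0 ≤ morawetzWeight L t r * energyDensity u t r + morawetzWeight L t r * fluxDensity u t r := by
  rw [← mul_add]
  exact mul_nonneg (morawetzWeight_nonneg h)
    (energyForm_add_fluxForm_nonneg ((abs_nonneg t).trans h.le))

theorem weighted_energy_estimate (hR : 0 < R)
    (hu : ContDiffOn ℝ 2 (Function.uncurry u) (extRegion R))
    (hs : 0 ≤ s) (hsT : s ≤ T) (ha : R < a) (haL : a ≤ L) (hΛ : 0 ≤ Λ)
    (hforce : ∀ τ ∈ Icc s T, ∀ r, R + τ < r →
      r ^ 3 * dtu u τ r * waveOp u τ r ≤ Λ / (R + τ) ^ 2 * energyDensity u τ r)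
    (hS : ∀ τ ∈ Icc s T, ∫ ξ in a..L, energyDensity u τ (ξ + τ) ≤ S) :
    (∫ ξ in a..L, morawetzWeight L T (ξ + T) * energyDensity u T (ξ + T))
        + 1 / 32 * (∫ τ in s..T, ∫ ξ in a..L, nullCutoff L τ (ξ + τ) * bulkDensity u τ (ξ + τ))
      ≤ (∫ ξ in a..L, morawetzWeight L s (ξ + s) * energyDensity u s (ξ + s))
        + 2 * Λ * S * (1 / (R + s) - 1 / (R + T)) := by
  set E := fun τ ξ => 2 * Λ * energyDensity u τ (ξ + τ)
  set B := fun τ ξ => nullCutoff L τ (ξ + τ) * bulkDensity u τ (ξ + τ)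
  have hA := contDiffOn_morawetzWeight (L := L) hR.le
  have hcont {F : ℝ → ℝ → ℝ} (hF : ContinuousOn (Function.uncurry F) (extRegion R)) :=
    continuousOn_comp_coneShear hF hs hsT ha haL
  rw [uIcc_of_le hsT, uIcc_of_le haL] at hcont
  have hE : ContinuousOn (Function.uncurry E) (Icc s T ×ˢ Icc a L) :=
    continuousOn_const.mul (hcont (contDiffOn_energyDensity hu).continuousOn)
  have hB : ContinuousOn (Function.uncurry B) (Icc s T ×ˢ Icc a L) :=
    hcont (continuousOn_nullCutoff_mul_bulkDensity (hu.of_le one_le_two))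
  have hinv : ContinuousOn (fun q : ℝ × ℝ => ((R + q.1) ^ 2)⁻¹) (Icc s T ×ˢ Icc a L) :=
    (continuousOn_inv_sq_add (by linarith)).comp continuousOn_fst fun q hq => hq.1.1
  have hN : ContinuousOn (Function.uncurry fun τ ξ => ((R + τ) ^ 2)⁻¹ * E τ ξ - 1 / 32 * B τ ξ)
      (Icc s T ×ˢ Icc a L) := (hinv.mul hE).sub (continuousOn_const.mul hB)
  have hdivergence := integral_sub_integral_le_of_divergence_le
    (W := fun t r => morawetzWeight L t r * energyDensity u t r)
    (Y := fun t r => morawetzWeight L t r * fluxDensity u t r)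
    (hA.mul (contDiffOn_energyDensity hu)) (hA.mul (contDiffOn_fluxDensity hu))
    hN hs hsT ha haL
    (fun τ hτ => weighted_energy_add_flux_nonneg (by linarith [abs_of_nonneg (hs.trans hτ.1)]))
    (fun τ hτ => by simp [morawetzWeight_eq_zero (by linarith [hs.trans hτ.1] : L ≤ L + τ + τ)])
    (fun τ hτ ξ hξ => by
      have hr : R + τ < ξ + τ := by linarith [hξ.1]
      refine (weighted_energy_divergence_le hR.le hu (hs.trans hτ.1)
        (mem_extRegion_of_lt (hs.trans hτ.1) hr) (by positivity) (hforce τ hτ _ hr)).trans_eq ?_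
      simp only [E, B]
      ring)
  have hintegral := integral_integral_inv_sq_mul_sub_le (c := 1 / 32) (S := 2 * Λ * S)
    (by linarith : 0 < R + s) hsT haL hB hE fun τ hτ => by
      rw [intervalIntegral.integral_const_mul]
      exact mul_le_mul_of_nonneg_left (hS τ hτ) (by positivity)
  linarith

end WeightedEnergy

/-! ### The bootstrap -/

/-- A `C²` exterior solution of `waveOp u = |u|^{q+3} u` which is arbitrarily small along some
sequence of radii at each time `t ≥ 0`. The smallness is the part of `u(t) → 0` at infinity that
lets `u(t)` be recovered from its radial derivative. -/
structure IsDecayingSol (q : ℕ) (R : ℝ) (u : ℝ → ℝ → ℝ) : Prop where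
  contDiffOn : ContDiffOn ℝ 2 (Function.uncurry u) (extRegion R)
  waveOp_eq : ∀ ⦃t r : ℝ⦄, (t, r) ∈ extRegion R → waveOp u t r = |u t r| ^ (q + 3) * u t r
  frequently_small : ∀ t, 0 ≤ t → ∀ ε > 0, ∃ᶠ r in atTop, |u t r| < ε

/-- The energy at time `t` in `a < r - t < L`, weighted by `morawetzWeight L`. -/
noncomputable def weightedEnergy (u : ℝ → ℝ → ℝ) (a L t : ℝ) : ℝ :=
  ∫ ξ in a..L, morawetzWeight L t (ξ + t) * energyDensity u t (ξ + t)

/-- The Morawetz density integrated over `s < t < T`, `a < r - t < L`, cut off by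
`nullCutoff L`. -/
noncomputable def weightedBulk (u : ℝ → ℝ → ℝ) (a L s T : ℝ) : ℝ :=
  ∫ τ in s..T, ∫ ξ in a..L, nullCutoff L τ (ξ + τ) * bulkDensity u τ (ξ + τ)

/-- The constant by which the forcing `|u|^{q+3} u` is controlled when `u` has energy at most
`S`; it is `cube_mul_forcing_le_energyForm` with the amplitude bound `r |u| ≤ √(8S)`. -/
noncomputable def forcingConst (q : ℕ) (R S : ℝ) : ℝ := 3 * √(8 * S) ^ (q + 3) / R ^ q

section Bootstrap

variable {q : ℕ} {R L a b s t T S K M : ℝ} {u : ℝ → ℝ → ℝ}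

theorem contDiffOn_slice {n : WithTop ℕ∞} {W : ℝ → ℝ → ℝ}
    (hW : ContDiffOn ℝ n (Function.uncurry W) (extRegion R)) (ht : 0 ≤ t) :
    ContDiffOn ℝ n (W t) (Ioi (R + t)) :=
  hW.comp (f := fun r => (t, r)) (by fun_prop) fun _ hr => mem_extRegion_of_lt ht hr

theorem continuousOn_energyDensity_slice
    (hu : ContDiffOn ℝ 2 (Function.uncurry u) (extRegion R)) (ht : 0 ≤ t) :
    ContinuousOn (energyDensity u t) (Ioi (R + t)) :=
  (contDiffOn_slice (contDiffOn_energyDensity hu) ht).continuousOn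

theorem integral_energyDensity_shift_le (hS : TailIntegralLE (R + t) (energyDensity u t) S)
    (ha : R < a) (hab : a ≤ b) : ∫ ξ in a..b, energyDensity u t (ξ + t) ≤ S := by
  rw [intervalIntegral.integral_comp_add_right (energyDensity u t)]
  exact hS (by linarith) (by linarith)

theorem intervalIntegrable_weightedEnergy (hR : 0 ≤ R)
    (hu : ContDiffOn ℝ 2 (Function.uncurry u) (extRegion R)) (ht : 0 ≤ t) (ha : R < a)
    (hab : a ≤ b) :
    IntervalIntegrable (fun ξ => morawetzWeight L t (ξ + t) * energyDensity u t (ξ + t))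
      volume a b :=
  intervalIntegrable_slice_coneShear
    (N := fun t r => morawetzWeight L t r * energyDensity u t r)
    ((contDiffOn_morawetzWeight hR).mul (contDiffOn_energyDensity hu)).continuousOn ht ha hab

theorem weightedEnergyDensity_nonneg (hR : 0 ≤ R) (ht : 0 ≤ t) {ξ : ℝ} (hξ : R < ξ) :
    0 ≤ morawetzWeight L t (ξ + t) * energyDensity u t (ξ + t) := by
  have h : |t| < ξ + t := by rw [abs_of_nonneg ht]; linarith
  exact mul_nonneg (morawetzWeight_nonneg h) (energyDensity_nonneg ((abs_nonneg t).trans h.le))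

theorem weightedEnergy_nonneg (hR : 0 ≤ R) (ht : 0 ≤ t) (ha : R < a) (haL : a ≤ L) :
    0 ≤ weightedEnergy u a L t :=
  intervalIntegral.integral_nonneg haL fun _ hξ =>
    weightedEnergyDensity_nonneg hR ht (ha.trans_le hξ.1)

theorem weightedEnergy_le (hR : 0 ≤ R) (hu : ContDiffOn ℝ 2 (Function.uncurry u) (extRegion R))
    (ht : 0 ≤ t) (ha : R < a) (haL : a ≤ L)
    (hS : TailIntegralLE (R + t) (energyDensity u t) S) : weightedEnergy u a L t ≤ 2 * S := by
  have hE := intervalIntegrable_slice_coneShear (contDiffOn_energyDensity hu).continuousOn ht ha haL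
  calc weightedEnergy u a L t ≤ ∫ ξ in a..L, 2 * energyDensity u t (ξ + t) := by
        refine intervalIntegral.integral_mono_on haL
          (intervalIntegrable_weightedEnergy hR hu ht ha haL) (hE.const_mul 2) fun ξ hξ => ?_
        have h : |t| < ξ + t := by rw [abs_of_nonneg ht]; linarith [hξ.1]
        exact mul_le_mul_of_nonneg_right (morawetzWeight_le_two ht h)
          (energyDensity_nonneg ((abs_nonneg t).trans h.le))
    _ ≤ 2 * S := by
        rw [intervalIntegral.integral_const_mul]
        exact mul_le_mul_of_nonneg_left (integral_energyDensity_shift_le hS ha haL) two_pos.le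

theorem integral_energyDensity_le_weightedEnergy (hR : 0 ≤ R)
    (hu : ContDiffOn ℝ 2 (Function.uncurry u) (extRegion R)) (ht : 0 ≤ t) (ha : R < a)
    (hab : a ≤ b) (hL : b + 2 * t + 1 ≤ L) :
    ∫ ξ in a..b, energyDensity u t (ξ + t) ≤ weightedEnergy u a L t := by
  have hE := intervalIntegrable_slice_coneShear (contDiffOn_energyDensity hu).continuousOn ht ha hab
  have haL : a ≤ L := by linarith
  calc ∫ ξ in a..b, energyDensity u t (ξ + t)
      ≤ ∫ ξ in a..b, morawetzWeight L t (ξ + t) * energyDensity u t (ξ + t) := by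
        refine intervalIntegral.integral_mono_on hab hE
          (intervalIntegrable_weightedEnergy hR hu ht ha hab) fun ξ hξ => ?_
        have h : |t| < ξ + t := by rw [abs_of_nonneg ht]; linarith [hξ.1]
        exact le_mul_of_one_le_left (energyDensity_nonneg ((abs_nonneg t).trans h.le))
          (one_le_morawetzWeight h (by linarith [hξ.2]))
    _ ≤ weightedEnergy u a L t :=
        intervalIntegral.integral_mono_interval le_rfl hab (by linarith)
          ((ae_restrict_iff' measurableSet_Ioc).2 (ae_of_all _ fun ξ hξ =>
            weightedEnergyDensity_nonneg hR ht (ha.trans hξ.1)))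
          (intervalIntegrable_weightedEnergy hR hu ht ha haL)

theorem weightedBulk_nonneg (hsT : s ≤ T) (haL : a ≤ L) : 0 ≤ weightedBulk u a L s T :=
  intervalIntegral.integral_nonneg hsT fun _ _ => intervalIntegral.integral_nonneg haL fun _ _ =>
    mul_nonneg (nullCutoff_nonneg _ _ _) (bulkDensity_nonneg _ _ _)

theorem integral_bulkDensity_le_weightedBulk
    (hu : ContDiffOn ℝ 1 (Function.uncurry u) (extRegion R)) (hT : 0 ≤ T) (ha : R < a)
    (hab : a ≤ b) (hL : b + 2 * T + 1 ≤ L) :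
    ∫ τ in (0 : ℝ)..T, ∫ ξ in a..b, bulkDensity u τ (ξ + τ) ≤ weightedBulk u a L 0 T := by
  have haL : a ≤ L := by linarith
  have hcut := continuousOn_nullCutoff_mul_bulkDensity (L := L) hu
  refine intervalIntegral.integral_mono_on hT
    (intervalIntegrable_integral_coneShear (continuousOn_bulkDensity hu) le_rfl hT ha hab)
    (intervalIntegrable_integral_coneShear
      (N := fun t r => nullCutoff L t r * bulkDensity u t r) hcut le_rfl hT ha haL)
    fun τ hτ => ?_
  calc ∫ ξ in a..b, bulkDensity u τ (ξ + τ)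
      = ∫ ξ in a..b, nullCutoff L τ (ξ + τ) * bulkDensity u τ (ξ + τ) := by
        refine intervalIntegral.integral_congr fun ξ hξ => ?_
        rw [uIcc_of_le hab] at hξ
        simp only [nullCutoff_eq_one (by linarith [hξ.2, hτ.2] : ξ + τ + τ + 1 ≤ L), one_mul]
    _ ≤ ∫ ξ in a..L, nullCutoff L τ (ξ + τ) * bulkDensity u τ (ξ + τ) :=
        intervalIntegral.integral_mono_interval le_rfl hab (by linarith)
          (ae_of_all _ fun ξ => mul_nonneg (nullCutoff_nonneg _ _ _) (bulkDensity_nonneg _ _ _))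
          (intervalIntegrable_slice_coneShear
            (N := fun t r => nullCutoff L t r * bulkDensity u t r) hcut hτ.1 ha haL)

theorem forcingConst_nonneg (hR : 0 ≤ R) : 0 ≤ forcingConst q R S := by
  unfold forcingConst
  positivity

theorem inv_sub_inv_le (hR : 0 < R) (hs : 0 ≤ s) (hsT : s ≤ T) :
    1 / (R + s) - 1 / (R + T) ≤ (T - s) / R ^ 2 := by
  have hRs : 0 < R + s := by linarith
  have hRT : 0 < R + T := by linarith
  rw [div_sub_div _ _ hRs.ne' hRT.ne', one_mul, mul_one, add_sub_add_left_eq_sub]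
  have hmul : R ^ 2 ≤ (R + s) * (R + T) := by nlinarith [mul_nonneg hs (hs.trans hsT)]
  exact div_le_div_of_nonneg_left (by linarith) (by positivity) hmul

theorem forall_nonneg_of_uniform_step {P : ℝ → Prop} {δ : ℝ} (hδ : 0 < δ) (h0 : P 0)
    (hstep : ∀ s, 0 ≤ s → (∀ τ ∈ Icc 0 s, P τ) → ∀ τ ∈ Icc s (s + δ), P τ) :
    ∀ τ, 0 ≤ τ → P τ := by
  have hind (n : ℕ) : ∀ τ ∈ Icc 0 (n * δ), P τ := by
    induction n with
    | zero =>
      intro τ hτ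
      rw [Nat.cast_zero, zero_mul, Icc_self] at hτ
      exact hτ ▸ h0
    | succ n ih =>
      intro τ hτ
      obtain hle | hgt := le_total τ (n * δ)
      · exact ih τ ⟨hτ.1, hle⟩
      · refine hstep _ (by positivity) ih τ ⟨hgt, hτ.2.trans_eq ?_⟩
        push_cast
        ring
  intro τ hτ
  obtain ⟨n, hn⟩ := exists_nat_ge (τ / δ)
  exact hind n τ ⟨hτ, (div_le_iff₀ hδ).1 hn⟩

namespace IsDecayingSol

theorem mul_abs_le (hR : 0 < R) (h : IsDecayingSol q R u) (ht : 0 ≤ t)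
    (hS : TailIntegralLE (R + t) (energyDensity u t) S) {r : ℝ} (hr : R + t < r) :
    r * |u t r| ≤ √(8 * S) := by
  have hRt : 0 < R + t := by linarith
  have hv : ContDiffOn ℝ 1 (u t) (Ioi (R + t)) :=
    contDiffOn_slice (h.contDiffOn.of_le one_le_two) ht
  have hE := continuousOn_energyDensity_slice h.contDiffOn ht
  have hderiv : TailIntegralLE (R + t) (fun r => r ^ 3 * deriv (u t) r ^ 2) (√(8 * S) ^ 2) := by
    rw [Real.sq_sqrt (mul_nonneg (by norm_num) hS.nonneg)]
    refine (hS.const_mul (by norm_num : (0 : ℝ) ≤ 8)).mono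
      ((continuousOn_pow 3).mul ((continuousOn_deriv_of_contDiffOn_Ioi hv).pow 2))
      (continuousOn_const.mul hE) (fun r hr => ?_) le_rfl
    have hr0 : 0 < r := hRt.trans hr
    refine le_trans ?_ (cube_mul_sq_add_sq_le_energyForm hr0.le)
    rw [mul_comm]
    exact mul_le_mul_of_nonneg_right (le_add_of_nonneg_right (sq_nonneg _)) (by positivity)
  have hle := abs_le_div_of_frequently_small hRt hv (Real.sqrt_nonneg _) hderiv
    (h.frequently_small t ht) hr
  rw [mul_comm]
  exact (le_div_iff₀ (hRt.trans hr)).1 hle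

theorem weightedEnergy_add_weightedBulk_le (hR : 0 < R) (h : IsDecayingSol q R u) (hs : 0 ≤ s)
    (hsT : s ≤ T) (ha : R < a) (haL : a ≤ L)
    (hS : ∀ τ ∈ Icc s T, TailIntegralLE (R + τ) (energyDensity u τ) S) :
    weightedEnergy u a L T + 1 / 32 * weightedBulk u a L s T
      ≤ weightedEnergy u a L s
        + 2 * forcingConst q R S * S * (1 / (R + s) - 1 / (R + T)) :=
  weighted_energy_estimate hR h.contDiffOn hs hsT ha haL (forcingConst_nonneg hR.le)
    (fun τ hτ r hr => by
      have hτ0 := hs.trans hτ.1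
      rw [h.waveOp_eq (mem_extRegion_of_lt hτ0 hr)]
      exact cube_mul_forcing_le_energyForm q hR hτ0 hr.le (h.mul_abs_le hR hτ0 (hS τ hτ) hr))
    fun τ hτ => integral_energyDensity_shift_le (hS τ hτ) ha haL

-- The forcing is superlinear in the energy, so a bound `2K` improves itself to `3K/2`.
theorem weightedEnergy_add_weightedBulk_le_of_small (hR : 0 < R) (h : IsDecayingSol q R u)
    (h0 : TailIntegralLE R (energyDensity u 0) (K / 2))
    (hsmall : 8 * forcingConst q R (2 * K) ≤ R) (hT : 0 ≤ T) (ha : R < a) (haL : a ≤ L)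
    (h2K : ∀ τ ∈ Icc 0 T, TailIntegralLE (R + τ) (energyDensity u τ) (2 * K)) :
    weightedEnergy u a L T + 1 / 32 * weightedBulk u a L 0 T ≤ 3 / 2 * K := by
  have hK : 0 ≤ K := by linarith [h0.nonneg]
  have hC := forcingConst_nonneg (q := q) (S := 2 * K) hR.le
  have hstart : weightedEnergy u a L 0 ≤ 2 * (K / 2) :=
    weightedEnergy_le hR.le h.contDiffOn le_rfl ha haL (by rwa [add_zero])
  have hforcing : 2 * forcingConst q R (2 * K) * (2 * K) * (1 / (R + 0) - 1 / (R + T))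
      ≤ K / 2 :=
    calc _ ≤ 2 * forcingConst q R (2 * K) * (2 * K) * (1 / R) := by
          rw [add_zero]
          gcongr
          exact sub_le_self _ (by positivity)
      _ = 8 * forcingConst q R (2 * K) / R * (K / 2) := by ring
      _ ≤ K / 2 := mul_le_of_le_one_left (by linarith) ((div_le_one hR).2 hsmall)
  linarith [h.weightedEnergy_add_weightedBulk_le hR le_rfl hT ha haL h2K]

theorem energy_step (hR : 0 < R) (h : IsDecayingSol q R u) (hs : 0 ≤ s) (hsT : s ≤ T)
    (hM : ∀ τ, 0 ≤ τ → TailIntegralLE (R + τ) (energyDensity u τ) M)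
    (hK : ∀ a L, R < a → a ≤ L → weightedEnergy u a L s ≤ 3 / 2 * K)
    (hδ : 2 * forcingConst q R M * M * ((T - s) / R ^ 2) ≤ K / 2) :
    TailIntegralLE (R + T) (energyDensity u T) (2 * K) := by
  intro a b ha hab
  have ha' : R < a - T := by linarith
  have hT := hs.trans hsT
  have haL : a - T ≤ b - T + 2 * T + 1 := by linarith
  have hMnonneg := (hM 0 le_rfl).nonneg
  have hlower := integral_energyDensity_le_weightedEnergy hR.le h.contDiffOn hT ha'
    (sub_le_sub_right hab T) le_rfl
  rw [intervalIntegral.integral_comp_add_right (energyDensity u T), sub_add_cancel,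
    sub_add_cancel] at hlower
  have hgrowth := h.weightedEnergy_add_weightedBulk_le hR hs hsT ha' haL
    fun τ hτ => hM τ (hs.trans hτ.1)
  have hforcing := mul_le_mul_of_nonneg_left (inv_sub_inv_le hR hs hsT)
    (mul_nonneg (mul_nonneg two_pos.le (forcingConst_nonneg (q := q) (S := M) hR.le)) hMnonneg)
  have hbulk := weightedBulk_nonneg (u := u) hsT haL
  linarith [hK _ _ ha' haL]

theorem tailIntegralLE_energyDensity (hR : 0 < R) (h : IsDecayingSol q R u) (hK : 0 < K)
    (hM : ∀ τ, 0 ≤ τ → TailIntegralLE (R + τ) (energyDensity u τ) M)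
    (h0 : TailIntegralLE R (energyDensity u 0) (K / 2))
    (hsmall : 8 * forcingConst q R (2 * K) ≤ R) :
    ∀ τ, 0 ≤ τ → TailIntegralLE (R + τ) (energyDensity u τ) (2 * K) := by
  set B := 2 * forcingConst q R M * M
  have hB : 0 ≤ B := mul_nonneg (mul_nonneg two_pos.le (forcingConst_nonneg hR.le))
    (hM 0 le_rfl).nonneg
  set δ := K * R ^ 2 / (2 * (B + 1))
  have hBδ : B * (δ / R ^ 2) ≤ K / 2 := by
    have heq : B * (δ / R ^ 2) = K / 2 * (B / (B + 1)) := by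
      simp only [δ]
      field_simp
    rw [heq]
    exact mul_le_of_le_one_right (by linarith) ((div_le_one (by linarith)).2 (by linarith))
  refine forall_nonneg_of_uniform_step (by positivity : 0 < δ)
    (fun a b ha hab => ?_) fun s hs h2K τ hτ => ?_
  · rw [add_zero] at ha
    linarith [h0 ha hab]
  · refine h.energy_step hR hs hτ.1 hM (fun a L ha haL => ?_) (le_trans ?_ hBδ)
    · linarith [weightedBulk_nonneg (u := u) hs haL,
        h.weightedEnergy_add_weightedBulk_le_of_small hR h0 hsmall hs ha haL h2K]
    · gcongr
      linarith [hτ.2]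

theorem integral_bulkDensity_le (hR : 0 < R) (h : IsDecayingSol q R u)
    (h0 : TailIntegralLE R (energyDensity u 0) (K / 2))
    (hsmall : 8 * forcingConst q R (2 * K) ≤ R)
    (h2K : ∀ τ, 0 ≤ τ → TailIntegralLE (R + τ) (energyDensity u τ) (2 * K))
    (hT : 0 ≤ T) (ha : R < a) (hab : a ≤ b) :
    ∫ τ in (0 : ℝ)..T, ∫ ξ in a..b, bulkDensity u τ (ξ + τ) ≤ 48 * K := by
  have haL : a ≤ b + 2 * T + 1 := by linarith
  linarith [integral_bulkDensity_le_weightedBulk (h.contDiffOn.of_le one_le_two) hT ha hab le_rfl,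
    h.weightedEnergy_add_weightedBulk_le_of_small hR h0 hsmall hT ha haL fun τ hτ => h2K τ hτ.1,
    weightedEnergy_nonneg (u := u) hR.le hT ha haL]

end IsDecayingSol

end Bootstrap

/-! ### Exterior norms -/

theorem eH_le_ofReal_iff {ρ m : ℝ} {v w : ℝ → ℝ} (hρ : 0 ≤ ρ)
    (hv : ContDiffOn ℝ 1 v (Ioi ρ)) (hw : ContinuousOn w (Ioi ρ)) (hm : 0 ≤ m) :
    eH ρ v w ≤ ENNReal.ofReal m
      ↔ TailIntegralLE ρ (fun r => (deriv v r ^ 2 + w r ^ 2) * r ^ 3) (m ^ 2) := by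
  have hd := continuousOn_deriv_of_contDiffOn_Ioi hv
  have hcube (r : ℝ) (hr : ρ < r) : 0 ≤ r ^ 3 := pow_nonneg (hρ.trans hr.le) 3
  have hsum : (∫⁻ r in Ioi ρ, ENNReal.ofReal (deriv v r ^ 2 * r ^ 3))
      + ∫⁻ r in Ioi ρ, ENNReal.ofReal (w r ^ 2 * r ^ 3)
      = ∫⁻ r in Ioi ρ, ENNReal.ofReal ((deriv v r ^ 2 + w r ^ 2) * r ^ 3) := by
    rw [← lintegral_add_right' _ (ContinuousOn.aemeasurable
      (by fun_prop) measurableSet_Ioi).ennreal_ofReal]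
    refine setLIntegral_congr_fun measurableSet_Ioi fun r hr => ?_
    have := hcube r hr
    simp only [add_mul]
    rw [ENNReal.ofReal_add (by positivity) (by positivity)]
  rw [tailIntegralLE_iff_lintegral_le (by fun_prop)
    (fun r hr => mul_nonneg (by positivity) (hcube r hr)) (sq_nonneg m), eH, hsum,
    one_div, ENNReal.rpow_inv_le_iff two_pos, ENNReal.ofReal_rpow_of_nonneg hm two_pos.le,
    Real.rpow_two]

theorem le_of_ae_le_of_continuousOn {f g : ℝ → ℝ} {c t : ℝ} (hf : ContinuousOn f (Ici c))
    (hg : ContinuousOn g (Ici c)) (hfg : ∀ᵐ s, c < s → f s ≤ g s) (ht : c ≤ t) :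
    f t ≤ g t := by
  by_contra! hlt
  have hnear : ∀ᶠ s in nhdsWithin t (Ioi t), g s < f s :=
    ((hg t ht).eventually_lt (hf t ht) hlt).filter_mono
      (nhdsWithin_mono t fun _ hs => ht.trans (le_of_lt hs))
  obtain ⟨b, hb, hsub⟩ := mem_nhdsGT_iff_exists_Ioo_subset.1 hnear
  obtain ⟨s, hle, hs⟩ := (Measure.dense_of_ae hfg).exists_mem_open isOpen_Ioo (nonempty_Ioo.2 hb)
  exact (show g s < f s from hsub hs).not_ge (hle (ht.trans_lt hs.1))

section Norms

variable {q : ℕ} {R t m S M : ℝ} {u : ℝ → ℝ → ℝ}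

theorem measurable_setLIntegral_extRegion {F : ℝ × ℝ → ℝ≥0∞} (hF : ContinuousOn F (extRegion R)) :
    Measurable fun t => ∫⁻ r in Ioi (R + |t|), F (t, r) := by
  have hmeas : Measurable ((extRegion R).indicator F) := by
    classical
    rw [← piecewise_eq_indicator]
    exact hF.measurable_piecewise continuousOn_const (isOpen_extRegion R).measurableSet
  convert hmeas.lintegral_prod_right' (ν := volume) using 2 with t
  exact (lintegral_indicator measurableSet_Ioi _).symm

theorem ae_lintegral_lt_top_of_eLL_lt_top {a b : ℝ} (ha : 0 < a) (hb : 0 < b)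
    (hu : ContinuousOn (Function.uncurry u) (extRegion R)) (hfin : eLL a b R u < ⊤) :
    ∀ᵐ t, ∫⁻ r in Ioi (R + |t|), ENNReal.ofReal (|u t r| ^ b * r ^ 3) < ⊤ := by
  have hcont : ContinuousOn (fun q : ℝ × ℝ => ENNReal.ofReal (|u q.1 q.2| ^ b * q.2 ^ 3))
      (extRegion R) :=
    ENNReal.continuous_ofReal.comp_continuousOn
      ((hu.abs.rpow_const fun _ _ => Or.inr hb.le).mul (by fun_prop))
  have hmeas := (measurable_setLIntegral_extRegion hcont).pow_const (a / b)
  filter_upwards [ae_lt_top' hmeas.aemeasurable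
    (((ENNReal.rpow_lt_top_iff_of_pos (one_div_pos.2 ha)).1 hfin).ne)] with t ht
  exact (ENNReal.rpow_lt_top_iff_of_pos (div_pos ha hb)).1 ht

theorem eH_slice_le_ofReal_iff (hR : 0 < R)
    (hu : ContDiffOn ℝ 2 (Function.uncurry u) (extRegion R)) (ht : 0 ≤ t) (hm : 0 ≤ m) :
    eH (R + |t|) (u t) (fun r => dtu u t r) ≤ ENNReal.ofReal m
      ↔ TailIntegralLE (R + t) (fun r => (dru u t r ^ 2 + dtu u t r ^ 2) * r ^ 3) (m ^ 2) := by
  rw [abs_of_nonneg ht]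
  exact eH_le_ofReal_iff (by linarith) (contDiffOn_slice (hu.of_le one_le_two) ht)
    (contDiffOn_slice (contDiffOn_one_dtu hu) ht).continuousOn hm

theorem continuousOn_sq_add_sq_slice (hu : ContDiffOn ℝ 2 (Function.uncurry u) (extRegion R))
    (ht : 0 ≤ t) :
    ContinuousOn (fun r => (dru u t r ^ 2 + dtu u t r ^ 2) * r ^ 3) (Ioi (R + t)) := by
  have hw := (contDiffOn_slice (contDiffOn_one_dtu hu) ht).continuousOn
  have hd := (contDiffOn_slice (contDiffOn_one_dru hu) ht).continuousOn
  fun_prop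

theorem tailIntegralLE_deriv_of_eH_le (hR : 0 < R)
    (hu : ContDiffOn ℝ 2 (Function.uncurry u) (extRegion R)) (ht : 0 ≤ t) (hm : 0 ≤ m)
    (hE : eH (R + |t|) (u t) (fun r => dtu u t r) ≤ ENNReal.ofReal m) :
    TailIntegralLE (R + t) (fun r => r ^ 3 * deriv (u t) r ^ 2) (m ^ 2) := by
  refine ((eH_slice_le_ofReal_iff hR hu ht hm).1 hE).mono
    ((continuousOn_pow 3).mul
      ((contDiffOn_slice (contDiffOn_one_dru hu) ht).continuousOn.pow 2))
    (continuousOn_sq_add_sq_slice hu ht) (fun r hr => ?_) le_rfl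
  have hr0 : 0 < r := by linarith
  rw [mul_comm]
  exact mul_le_mul_of_nonneg_right (le_add_of_nonneg_right (sq_nonneg _)) (by positivity)

theorem tailIntegralLE_energyDensity_of_eH_le (hR : 0 < R)
    (hu : ContDiffOn ℝ 2 (Function.uncurry u) (extRegion R)) (ht : 0 ≤ t) (hm : 0 ≤ m)
    (hsmall : ∀ ε > 0, ∃ᶠ r in atTop, |u t r| < ε)
    (hE : eH (R + |t|) (u t) (fun r => dtu u t r) ≤ ENNReal.ofReal m) :
    TailIntegralLE (R + t) (energyDensity u t) (7 * m ^ 2) := by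
  have hRt : 0 < R + t := by linarith
  have hv := contDiffOn_slice (hu.of_le one_le_two) ht
  have hvc := hv.continuousOn
  have hderiv := tailIntegralLE_deriv_of_eH_le hR hu ht hm hE
  have hhardy := tailIntegralLE_hardy hRt hv hderiv fun r hr =>
    abs_le_div_of_frequently_small hRt hv hm hderiv hsmall hr
  have henergy := (eH_slice_le_ofReal_iff hR hu ht hm).1 hE
  have hkinetic := continuousOn_sq_add_sq_slice hu ht
  have hsum := TailIntegralLE.add (by fun_prop) (by fun_prop)
    (henergy.const_mul (by norm_num : (0 : ℝ) ≤ 5 / 4))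
    (hhardy.const_mul (by norm_num : (0 : ℝ) ≤ 9 / 4))
  exact hsum.mono (continuousOn_energyDensity_slice hu ht) (by fun_prop)
    (fun r hr => energyForm_le_cube_mul_sq_add_sq (hRt.trans hr).le) (by nlinarith [sq_nonneg m])

theorem eH_le_of_tailIntegralLE_energyDensity (hR : 0 < R)
    (hu : ContDiffOn ℝ 2 (Function.uncurry u) (extRegion R)) (ht : 0 ≤ t) (hm : 0 ≤ m)
    (hS : TailIntegralLE (R + t) (energyDensity u t) S) (hSm : 8 * S ≤ m ^ 2) :
    eH (R + |t|) (u t) (fun r => dtu u t r) ≤ ENNReal.ofReal m := by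
  rw [eH_slice_le_ofReal_iff hR hu ht hm]
  have hE := continuousOn_energyDensity_slice hu ht
  exact (hS.const_mul (by norm_num : (0 : ℝ) ≤ 8)).mono (continuousOn_sq_add_sq_slice hu ht)
    (by fun_prop) (fun r hr => cube_mul_sq_add_sq_le_energyForm (by linarith)) hSm

-- The `L^aL^b` norm controls almost every time slice only; continuity along the outgoing ray
-- through `(t, r)` carries the resulting decay over to every `t`.
theorem abs_le_div_of_eLL_lt_top {a b r : ℝ} (ha : 0 < a) (hb : 0 < b) (hR : 0 < R)
    (hu : ContDiffOn ℝ 2 (Function.uncurry u) (extRegion R)) (hfin : eLL a b R u < ⊤)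
    (hM : 0 ≤ M)
    (hE : ∀ t, 0 ≤ t → eH (R + |t|) (u t) (fun r => dtu u t r) ≤ ENNReal.ofReal M)
    (ht : 0 ≤ t) (hr : R + t < r) : |u t r| ≤ M / r := by
  have hray (s : ℝ) : R + s < r - t + s := by linarith
  have hcont : ContinuousOn (fun s => |u s (r - t + s)|) (Ici 0) :=
    (hu.continuousOn.comp (f := fun s => (s, r - t + s)) (by fun_prop) fun s hs =>
      mem_extRegion_of_lt hs (hray s)).abs
  have hbound : ContinuousOn (fun s => M / (r - t + s)) (Ici 0) :=
    continuousOn_const.div (by fun_prop) fun s hs => by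
      linarith [hray s, mem_Ici.1 hs]
  have hae : ∀ᵐ s, 0 < s → |u s (r - t + s)| ≤ M / (r - t + s) := by
    filter_upwards [ae_lintegral_lt_top_of_eLL_lt_top ha hb hu.continuousOn hfin] with s hs hs0
    rw [abs_of_pos hs0] at hs
    exact abs_le_div_of_frequently_small (by linarith)
      (contDiffOn_slice (hu.of_le one_le_two) hs0.le) hM
      (tailIntegralLE_deriv_of_eH_le hR hu hs0.le hM (hE s hs0.le))
      (fun ε hε => frequently_small_of_lintegral_rpow_lt_top hb.le hs hε) (hray s)
  simpa only [sub_add_cancel] using le_of_ae_le_of_continuousOn hcont hbound hae ht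

theorem IsExtSol.contDiffOn_uncurry {p : ℕ} (h : IsExtSol p 2 R u) :
    ContDiffOn ℝ 2 (Function.uncurry u) (extRegion R) := h.1

theorem IsExtSol.isDecayingSol (hR : 0 < R) (h : IsExtSol (q + 4) 2 R u)
    (hfin : eLL 2 8 R u < ⊤) (hM : 0 ≤ M)
    (hE : ∀ t, 0 ≤ t → eH (R + |t|) (u t) (fun r => dtu u t r) ≤ ENNReal.ofReal M) :
    IsDecayingSol q R u where
  contDiffOn := h.contDiffOn_uncurry
  waveOp_eq t r hq := h.2 t r hq
  frequently_small t ht ε hε := by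
    have hdecay : ∀ᶠ r in atTop, |u t r| ≤ M / r :=
      (eventually_gt_atTop (R + t)).mono fun r hr =>
        abs_le_div_of_eLL_lt_top two_pos (by norm_num) hR h.contDiffOn_uncurry hfin hM hE ht hr
    have hlt : ∀ᶠ r : ℝ in atTop, M / r < ε :=
      (tendsto_const_nhds.div_atTop tendsto_id).eventually_lt_const hε
    exact (hdecay.and hlt).frequently.mono fun r hr => hr.1.trans_lt hr.2

end Norms

/-! ### Forward estimates and time reversal -/

/-- The part of `(eLL a b R u) ^ a` contributed by the times `t > 0`. -/
noncomputable def forwardLL (a b R : ℝ) (u : ℝ → ℝ → ℝ) : ℝ≥0∞ :=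
  ∫⁻ t in Ioi (0 : ℝ),
    (∫⁻ r in Ioi (R + |t|), ENNReal.ofReal (|u t r| ^ b * r ^ 3)) ^ (a / b)

/-- The function `u` with the direction of time reversed. -/
def timeReversal (u : ℝ → ℝ → ℝ) (t r : ℝ) : ℝ := u (-t) r

section TimeReversal

variable {a b R : ℝ} {u : ℝ → ℝ → ℝ}

theorem lintegral_comp_neg (f : ℝ → ℝ≥0∞) : ∫⁻ t, f (-t) = ∫⁻ t, f t :=
  (Measure.measurePreserving_neg volume).lintegral_comp_emb
    (MeasurableEquiv.neg ℝ).measurableEmbedding f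

theorem lintegral_eq_add_lintegral_comp_neg (f : ℝ → ℝ≥0∞) :
    ∫⁻ t, f t = (∫⁻ t in Ioi 0, f t) + ∫⁻ t in Ioi 0, f (-t) := by
  have hneg := (Measure.measurePreserving_neg (volume : Measure ℝ)).setLIntegral_comp_preimage_emb
    (MeasurableEquiv.neg ℝ).measurableEmbedding f (Iio 0)
  rw [Set.neg_preimage, Set.neg_Iio, neg_zero] at hneg
  rw [hneg, setLIntegral_congr Iio_ae_eq_Iic, ← compl_Ioi, lintegral_add_compl f measurableSet_Ioi]

theorem dtu_timeReversal (u : ℝ → ℝ → ℝ) (t r : ℝ) :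
    dtu (timeReversal u) t r = -dtu u (-t) r :=
  deriv_comp_neg (fun s => u s r) t

theorem deriv_dtu_timeReversal (u : ℝ → ℝ → ℝ) (t r : ℝ) :
    deriv (fun s => dtu (timeReversal u) s r) t = deriv (fun s => dtu u s r) (-t) := by
  have hfun : (fun s => dtu (timeReversal u) s r) = fun s => -(fun s => dtu u s r) (-s) :=
    funext fun s => dtu_timeReversal u s r
  rw [hfun, deriv.fun_neg, deriv_comp_neg (fun s => dtu u s r) t, neg_neg]

theorem isExtSol_timeReversal {p : ℕ} {n : ℕ∞} (h : IsExtSol p n R u) :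
    IsExtSol p n R (timeReversal u) := by
  refine ⟨h.1.comp (f := fun q : ℝ × ℝ => (-q.1, q.2)) (by fun_prop) fun q hq => ?_,
    fun t r hr => ?_⟩
  · rwa [mem_ofPred_eq, abs_neg]
  · rw [deriv_dtu_timeReversal]
    exact h.2 (-t) r (by rwa [abs_neg])

theorem eH_timeReversal (ρ : ℝ) (u : ℝ → ℝ → ℝ) (t : ℝ) :
    eH ρ (timeReversal u t) (fun r => dtu (timeReversal u) t r)
      = eH ρ (u (-t)) (fun r => dtu u (-t) r) := by
  simp only [eH, dtu_timeReversal, neg_sq]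
  rfl

theorem supH_timeReversal (R : ℝ) (u : ℝ → ℝ → ℝ) : supH R (timeReversal u) = supH R u := by
  simp only [supH, eH_timeReversal]
  rw [← (Equiv.neg ℝ).iSup_comp]
  simp only [Equiv.neg_apply, abs_neg, neg_neg]

theorem eLL_timeReversal (a b R : ℝ) (u : ℝ → ℝ → ℝ) :
    eLL a b R (timeReversal u) = eLL a b R u := by
  unfold eLL
  rw [← lintegral_comp_neg]
  simp only [timeReversal, abs_neg, neg_neg]

theorem eLL_eq_forwardLL (a b R : ℝ) (u : ℝ → ℝ → ℝ) :
    eLL a b R u = (forwardLL a b R u + forwardLL a b R (timeReversal u)) ^ (1 / a) := by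
  rw [eLL, lintegral_eq_add_lintegral_comp_neg]
  simp only [forwardLL, timeReversal, abs_neg]

theorem supH_le_of_forward {B : ℝ≥0∞}
    (hfwd : ∀ t, 0 ≤ t → eH (R + |t|) (u t) (fun r => dtu u t r) ≤ B)
    (hbwd : ∀ t, 0 ≤ t →
      eH (R + |t|) (timeReversal u t) (fun r => dtu (timeReversal u) t r) ≤ B) :
    supH R u ≤ B := by
  refine iSup_le fun t => ?_
  obtain ht | ht := le_total 0 t
  · exact hfwd t ht
  · simpa only [eH_timeReversal, neg_neg, abs_neg] using hbwd (-t) (by linarith)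

theorem eLL_le_of_forwardLL_le {X y : ℝ} (ha : 0 < a) (hX : 0 ≤ X) (hy : 0 ≤ y)
    (hfwd : forwardLL a b R u ≤ ENNReal.ofReal X)
    (hbwd : forwardLL a b R (timeReversal u) ≤ ENNReal.ofReal X) (hXy : 2 * X ≤ y ^ a) :
    eLL a b R u ≤ ENNReal.ofReal y := by
  rw [eLL_eq_forwardLL, one_div, ENNReal.rpow_inv_le_iff ha,
    ENNReal.ofReal_rpow_of_nonneg hy ha.le]
  calc _ ≤ ENNReal.ofReal X + ENNReal.ofReal X := add_le_add hfwd hbwd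
    _ = ENNReal.ofReal (2 * X) := by rw [← ENNReal.ofReal_add hX hX, two_mul]
    _ ≤ _ := ENNReal.ofReal_le_ofReal hXy

end TimeReversal

section Forward

variable {q : ℕ} {R M y B : ℝ} {u : ℝ → ℝ → ℝ}

theorem lintegral_bulkDensity_le (hu : ContDiffOn ℝ 1 (Function.uncurry u) (extRegion R))
    (hB : ∀ T a b, 0 ≤ T → R < a → a ≤ b →
      ∫ τ in (0 : ℝ)..T, ∫ ξ in a..b, bulkDensity u τ (ξ + τ) ≤ B) :
    ∫⁻ t in Ioi (0 : ℝ), ∫⁻ r in Ioi (R + |t|), ENNReal.ofReal (bulkDensity u t r)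
      ≤ ENNReal.ofReal B := by
  have hcont : ContinuousOn (Function.uncurry fun τ ξ => bulkDensity u τ (ξ + τ))
      (Ici 0 ×ˢ Ioi R) :=
    (continuousOn_bulkDensity hu).comp coneShear.continuous.continuousOn fun p hp =>
      mem_extRegion_of_lt hp.1 (add_lt_add_left hp.2 _)
  refine le_trans (le_of_eq ?_)
    (lintegral_lintegral_Ioi_le hcont (fun _ _ => bulkDensity_nonneg _ _ _) hB)
  refine setLIntegral_congr_fun measurableSet_Ioi fun t ht => ?_
  simp only [abs_of_pos (mem_Ioi.1 ht), setLIntegral_Ioi_add]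

theorem forwardLL_le {a b : ℝ} {c : ℝ≥0∞} (hc : c ≠ ⊤)
    (hbulk : ∫⁻ t in Ioi (0 : ℝ), ∫⁻ r in Ioi (R + |t|), ENNReal.ofReal (bulkDensity u t r)
      ≤ ENNReal.ofReal B)
    (hslice : ∀ t, 0 ≤ t →
      (∫⁻ r in Ioi (R + |t|), ENNReal.ofReal (|u t r| ^ b * r ^ 3)) ^ (a / b)
        ≤ c * ∫⁻ r in Ioi (R + |t|), ENNReal.ofReal (bulkDensity u t r)) :
    forwardLL a b R u ≤ c * ENNReal.ofReal B :=
  calc forwardLL a b R u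
      ≤ ∫⁻ t in Ioi (0 : ℝ), c * ∫⁻ r in Ioi (R + |t|), ENNReal.ofReal (bulkDensity u t r) :=
        setLIntegral_mono' measurableSet_Ioi fun t ht => hslice t (le_of_lt ht)
    _ = c * ∫⁻ t in Ioi (0 : ℝ), ∫⁻ r in Ioi (R + |t|), ENNReal.ofReal (bulkDensity u t r) :=
        lintegral_const_mul' _ _ hc
    _ ≤ c * ENNReal.ofReal B := mul_le_mul_right hbulk c

theorem forwardLL_two_eight_le (hR : 0 < R)
    (hu : ContDiffOn ℝ 1 (Function.uncurry u) (extRegion R))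
    (hM : ∀ t, 0 ≤ t → ∀ r, R + t < r → |u t r| ≤ M / r)
    (hbulk : ∫⁻ t in Ioi (0 : ℝ), ∫⁻ r in Ioi (R + |t|), ENNReal.ofReal (bulkDensity u t r)
      ≤ ENNReal.ofReal B) :
    forwardLL 2 8 R u ≤ ENNReal.ofReal (2 * B) := by
  rw [ENNReal.ofReal_mul two_pos.le, ENNReal.ofReal_ofNat]
  refine forwardLL_le (by simp) hbulk fun t ht => ?_
  rw [abs_of_nonneg ht]
  exact lintegral_pow_eight_le_bulkForm (by linarith) (contDiffOn_slice hu ht) (hM t ht)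

theorem forwardLL_three_six_le (hR : 0 < R)
    (hu : ContDiffOn ℝ 1 (Function.uncurry u) (extRegion R)) (hM0 : 0 < M)
    (hM : ∀ t, 0 ≤ t → ∀ r, R + t < r → |u t r| ≤ M / r)
    (hbulk : ∫⁻ t in Ioi (0 : ℝ), ∫⁻ r in Ioi (R + |t|), ENNReal.ofReal (bulkDensity u t r)
      ≤ ENNReal.ofReal B) :
    forwardLL 3 6 R u ≤ ENNReal.ofReal (2 * M * B) := by
  rw [ENNReal.ofReal_mul (by positivity)]
  refine forwardLL_le ENNReal.ofReal_ne_top hbulk fun t ht => ?_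
  rw [abs_of_nonneg ht]
  exact lintegral_pow_six_le_bulkForm (by linarith) (contDiffOn_slice hu ht) hM0 (hM t ht)

theorem eight_mul_forcingConst_le {S μ : ℝ} (hR : 0 < R) (hμ : √(8 * S) ≤ μ)
    (hsmall : 24 * μ ^ (q + 3) ≤ R ^ (q + 1)) : 8 * forcingConst q R S ≤ R := by
  rw [forcingConst, ← mul_div_assoc, div_le_iff₀ (by positivity)]
  calc 8 * (3 * √(8 * S) ^ (q + 3)) = 24 * √(8 * S) ^ (q + 3) := by ring
    _ ≤ 24 * μ ^ (q + 3) := by gcongr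
    _ ≤ R * R ^ q := hsmall.trans_eq (pow_succ' R q)

theorem eH_le_supH (R : ℝ) (u : ℝ → ℝ → ℝ) (t : ℝ) :
    eH (R + |t|) (u t) (fun r => dtu u t r) ≤ supH R u :=
  le_iSup (fun t => eH (R + |t|) (u t) (fun r => dtu u t r)) t

theorem IsExtSol.forward_estimates (hR : 0 < R) (h : IsExtSol (q + 4) 2 R u)
    (hLL : eLL 2 8 R u < ⊤) (hsup : supH R u < ⊤) (hy : 0 < y)
    (hdata : eH R (u 0) (fun r => dtu u 0 r) ≤ ENNReal.ofReal y)
    (hsmall : 24 * (15 * y) ^ (q + 3) ≤ R ^ (q + 1)) :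
    (∀ t, 0 ≤ t → eH (R + |t|) (u t) (fun r => dtu u t r) ≤ ENNReal.ofReal (15 * y)) ∧
      forwardLL 2 8 R u ≤ ENNReal.ofReal (1344 * y ^ 2) ∧
      forwardLL 3 6 R u ≤ ENNReal.ofReal (20160 * y ^ 3) := by
  have hu := h.contDiffOn_uncurry
  have hapriori (t : ℝ) : eH (R + |t|) (u t) (fun r => dtu u t r)
      ≤ ENNReal.ofReal (supH R u).toReal :=
    (eH_le_supH R u t).trans_eq (ENNReal.ofReal_toReal hsup.ne).symm
  have hsol := h.isDecayingSol hR hLL ENNReal.toReal_nonneg fun t _ => hapriori t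
  have hM (t : ℝ) (ht : 0 ≤ t) := tailIntegralLE_energyDensity_of_eH_le hR hu ht
    ENNReal.toReal_nonneg (hsol.frequently_small t ht) (hapriori t)
  have h0 : TailIntegralLE R (energyDensity u 0) (14 * y ^ 2 / 2) := by
    have hstart := tailIntegralLE_energyDensity_of_eH_le hR hu le_rfl hy.le
      (hsol.frequently_small 0 le_rfl) (by rwa [abs_zero, add_zero])
    rw [add_zero] at hstart
    exact fun a b ha hab => (hstart ha hab).trans_eq (by ring)
  have hsq : 8 * (2 * (14 * y ^ 2)) ≤ (15 * y) ^ 2 := by nlinarith [sq_nonneg y]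
  have hamp : √(8 * (2 * (14 * y ^ 2))) ≤ 15 * y := Real.sqrt_le_iff.2 ⟨by positivity, hsq⟩
  have hforcing := eight_mul_forcingConst_le hR hamp hsmall
  have henergy := hsol.tailIntegralLE_energyDensity hR (by positivity) hM h0 hforcing
  have hdecay (t : ℝ) (ht : 0 ≤ t) (r : ℝ) (hr : R + t < r) : |u t r| ≤ 15 * y / r := by
    rw [le_div_iff₀ (by linarith), mul_comm]
    exact (hsol.mul_abs_le hR ht (henergy t ht) hr).trans hamp
  have hbulk := lintegral_bulkDensity_le (hu.of_le one_le_two) fun T a b hT ha hab =>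
    hsol.integral_bulkDensity_le hR h0 hforcing henergy hT ha hab
  refine ⟨fun t ht => eH_le_of_tailIntegralLE_energyDensity hR hu ht (by positivity)
    (henergy t ht) hsq, ?_, ?_⟩
  · exact (forwardLL_two_eight_le hR (hu.of_le one_le_two) hdecay hbulk).trans_eq (by ring_nf)
  · exact (forwardLL_three_six_le hR (hu.of_le one_le_two) (by positivity) hdecay
      hbulk).trans_eq (by ring_nf)

theorem IsExtSol.norm_le (hR : 0 < R) (h : IsExtSol (q + 4) 2 R u)
    (hLL : eLL 2 8 R u < ⊤) (hsup : supH R u < ⊤) (hy : 0 < y)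
    (hdata : eH R (u 0) (fun r => dtu u 0 r) ≤ ENNReal.ofReal y)
    (hsmall : 24 * (15 * y) ^ (q + 3) ≤ R ^ (q + 1)) :
    eLL 2 8 R u + eLL 3 6 R u + supH R u ≤ ENNReal.ofReal (102 * y) := by
  obtain ⟨hH, h28, h36⟩ := h.forward_estimates hR hLL hsup hy hdata hsmall
  obtain ⟨hH', h28', h36'⟩ := (isExtSol_timeReversal h).forward_estimates hR
    (by rwa [eLL_timeReversal]) (by rwa [supH_timeReversal]) hy
    (by rwa [eH_timeReversal, neg_zero]) hsmall
  have hy3 := pow_pos hy 3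
  calc eLL 2 8 R u + eLL 3 6 R u + supH R u
      ≤ ENNReal.ofReal (52 * y) + ENNReal.ofReal (35 * y) + ENNReal.ofReal (15 * y) := by
        gcongr
        · refine eLL_le_of_forwardLL_le two_pos (by positivity) (by positivity) h28 h28' ?_
          rw [Real.rpow_two]
          nlinarith [sq_nonneg y]
        · refine eLL_le_of_forwardLL_le three_pos (by positivity) (by positivity) h36 h36' ?_
          rw [show (35 * y) ^ (3 : ℝ) = (35 * y) ^ 3 from mod_cast Real.rpow_natCast (35 * y) 3]
          nlinarith
        · exact supH_le_of_forward hH hH'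
    _ = ENNReal.ofReal (102 * y) := by
        rw [← ENNReal.ofReal_add (by positivity) (by positivity),
          ← ENNReal.ofReal_add (by positivity) (by positivity)]
        ring_nf

theorem smallness_of_le_rpow (hR : 0 < R) (hy : 0 ≤ y)
    (hle : y ≤ 1 / 100 * R ^ (((q + 4 : ℕ) - 3 : ℝ) / ((q + 4 : ℕ) - 1))) :
    24 * (15 * y) ^ (q + 3) ≤ R ^ (q + 1) := by
  have hexp : (((q + 4 : ℕ) - 3 : ℝ) / ((q + 4 : ℕ) - 1)) * (q + 3 : ℕ) = (q + 1 : ℕ) := by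
    push_cast
    have : (q : ℝ) + 4 - 1 ≠ 0 := by linarith [q.cast_nonneg (α := ℝ)]
    field_simp
    ring
  have hpow : (R ^ (((q + 4 : ℕ) - 3 : ℝ) / ((q + 4 : ℕ) - 1))) ^ (q + 3) = R ^ (q + 1) := by
    rw [← Real.rpow_natCast, ← Real.rpow_mul hR.le, hexp, Real.rpow_natCast]
  have hconst : 24 * (15 / 100 : ℝ) ^ (q + 3) ≤ 1 := by
    have := pow_le_pow_of_le_one (by norm_num) (by norm_num : (15 / 100 : ℝ) ≤ 1)
      (Nat.le_add_left 3 q)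
    linarith
  calc 24 * (15 * y) ^ (q + 3)
      ≤ 24 * (15 * (1 / 100 * R ^ (((q + 4 : ℕ) - 3 : ℝ) / ((q + 4 : ℕ) - 1)))) ^ (q + 3) := by
        gcongr
    _ = 24 * (15 / 100) ^ (q + 3) * R ^ (q + 1) := by
        rw [← hpow, mul_assoc, ← mul_pow]
        ring_nf
    _ ≤ R ^ (q + 1) := mul_le_of_le_one_left (by positivity) hconst

end Forward

theorem stmt5_general :
    ∃ δ₀ > (0 : ℝ), ∃ C > (0 : ℝ), ∀ p : ℕ, 4 ≤ p → ∀ R : ℝ, 0 < R → ∀ u : ℝ → ℝ → ℝ,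
      IsExtSol p 2 R u →
      eH R (u 0) (fun r => dtu u 0 r)
        ≤ ENNReal.ofReal (δ₀ * R ^ (((p : ℝ) - 3) / ((p : ℝ) - 1))) →
      eLL 2 8 R u < ⊤ → supH R u < ⊤ →
      eLL 2 8 R u + eLL 3 6 R u + supH R u
        ≤ ENNReal.ofReal C * eH R (u 0) (fun r => dtu u 0 r) := by
  refine ⟨1 / 200, by norm_num, 102, by norm_num, fun p hp R hR u hu hdata hLL hsup => ?_⟩
  obtain ⟨q, rfl⟩ := Nat.exists_eq_add_of_le' hp
  set D := R ^ (((q + 4 : ℕ) - 3 : ℝ) / ((q + 4 : ℕ) - 1))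
  set m := (eH R (u 0) (fun r => dtu u 0 r)).toReal
  have hD : 0 < D := by positivity
  have hm : eH R (u 0) (fun r => dtu u 0 r) = ENNReal.ofReal m :=
    (ENNReal.ofReal_toReal (hdata.trans_lt ENNReal.ofReal_lt_top).ne).symm
  have hmD : m < 1 / 100 * D :=
    (ENNReal.toReal_le_of_le_ofReal (by positivity) hdata).trans_lt (by linarith)
  rw [hm, ← ENNReal.ofReal_mul (by norm_num)]
  have hlim : Tendsto (fun y => ENNReal.ofReal (102 * y)) (nhdsWithin m (Ioi m))
      (nhds (ENNReal.ofReal (102 * m))) :=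
    ((ENNReal.continuous_ofReal.comp (continuous_const_mul 102)).tendsto m).mono_left
      nhdsWithin_le_nhds
  refine ge_of_tendsto hlim ?_
  filter_upwards [Ioo_mem_nhdsGT hmD] with y hy
  have hy0 : 0 < y := ENNReal.toReal_nonneg.trans_lt hy.1
  exact hu.norm_le hR hLL hsup hy0 (hm.trans_le (ENNReal.ofReal_le_ofReal hy.1.le))
    (smallness_of_le_rpow hR hy0.le hy.2.le)

/-- exterior small-data a priori estimate for the focusing
energy-supercritical wave equation in four space dimensions. -/
theorem stmt5 (p : ℕ) (hodd : Odd p) (hp5 : 5 ≤ p) :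
    ∃ δ₀ > (0:ℝ), ∃ C > (0:ℝ), ∀ (R : ℝ), 0 < R → ∀ u : ℝ → ℝ → ℝ,
      IsExtSol p 2 R u →
      eH R (u 0) (fun r => dtu u 0 r)
        ≤ ENNReal.ofReal (δ₀ * R ^ (((p:ℝ) - 3) / ((p:ℝ) - 1))) →
      eLL 2 8 R u < ⊤ → eLL 3 6 R u < ⊤ → supH R u < ⊤ →
      eLL 2 8 R u + eLL 3 6 R u + supH R u
        ≤ ENNReal.ofReal C * eH R (u 0) (fun r => dtu u 0 r) := by
  obtain ⟨δ₀, hδ₀, C, hC, hest⟩ := stmt5_general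
  exact ⟨δ₀, hδ₀, C, hC, fun R hR u hu hdata hLL _ => hest p (by lia) R hR u hu hdata hLL⟩
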